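/- Let (R, m) be a complete Noetherian local ring, M a finitely generated R-module of dimension d, and x = x_1, ..., x_d a sequence of d elements of R. Suppose 0 = ⋂_{p ∈ Ass M} N(p) is a reduced primary decomposition of the zero submodule of M, where each N(p) is a p-primary submodule of M (i.e. Ass(M/N(p)) = {p}). Then ⋂_{n ≥ 1} (x_1^n, ..., x_d^n)^lim_M = ⋂_{p ∈ J} N(p), where J = {p ∈ Ass M : the image of x is a system of parameters of R/p}. -/

import Mathlib

/-!
Write `J` for the set of associated primes `p` such that `x` is a system of parameters of `R/p`.
The quotient of `M` by the limit closure of `x₁^n, …, x_d^n` embeds in the top local cohomology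
`H^d_{(x)}(M)` through `u ↦ u / (x₁⋯x_d)^n`, and both inclusions are statements about this module.
It is realized concretely (`LimClos.Top`) by iterating the functor `Z ↦ Z_y / im Z`, and membership
in the limit closure is the predicate `LimClos.InLam`.

**The intersection of components lies in every limit closure.**  Let `K = ⋂_{p ∈ J} N(p)`.  No
associated prime of `K` lies in `J` (`LimClos.assoc_of_iInf`), so it is enough that the top local
cohomology of `K` vanishes.  By dévissage this reduces to `R/q` for primes `q` containing `Ann K` for
which `x` is not a system of parameters of `R/q`, i.e. to the Hartshorne–Lichtenbaum vanishing theorem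
(`LimClos.hartshorne_lichtenbaum`).  Its proof uses that the top local cohomology is Artinian
(through Melkersson's criterion), Matlis duality and the determinant trick
(`LimClos.exists_exponent`), and the linear compactness of the complete ring `R`
(`LimClos.exists_common_solution`).

**The intersection of the limit closures lies in `N(p)` for `p ∈ J`.**  Passing to `M / N(p)`, it
suffices that an element `u` in all the limit closures is killed by an element outside `p`
(`LimClos.exists_smul_eq_zero_of_InLam`), which is proved by induction on the number of parameters.
The Čech complex has Artinian homology, so the images of the powers of `x₁` on the homology
stabilize, and it follows that for some `j₀` and all `j ≥ j₀` the image of `x₁^{j₀} u` in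
`M / x₁^j M` lies in all limit closures for `x₂, …, x_d` (`LimClos.InLam_descend`).  By induction this
image vanishes locally at a prime `q'` containing `p + x₁R` with `dim R/q' = d - 1`, for every `j`;
Krull's intersection theorem in the localization at `q'` then shows that `x₁^{j₀} u` vanishes locally
at `q'`, hence at `p`, and `x₁ ∉ p`.
-/

open IsLocalRing

/-- The limit closure `(x)^lim_M = ⋃_{n>0} ((x₁^{n+1}, …, x_r^{n+1})M :_M (x₁⋯x_r)^n)` of a
sequence `x = x₁, …, x_r` of elements of `R` in the module `M`; the union of the increasing
family of submodules is expressed as a supremum. -/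
def limitClosure {R : Type*} [CommRing R] {M : Type*} [AddCommGroup M] [Module R M]
    {r : ℕ} (x : Fin r → R) : Submodule R M :=
  ⨆ n : ℕ, (Ideal.span (Set.range fun i => x i ^ (n + 2)) • (⊤ : Submodule R M)).comap
    (LinearMap.lsmul R M ((∏ i, x i) ^ (n + 1)))

/-- The dimension of a module `M`: the Krull dimension of `R ⧸ Ann M`. -/
noncomputable def moduleDim (R M : Type*) [CommRing R] [AddCommGroup M] [Module R M] :
    WithBot ℕ∞ :=
  ringKrullDim (R ⧸ Module.annihilator R M)

namespace LimClos

universe u v w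

/-! ### Localization at an element and the cokernel of the localization map -/

section Loc

variable {R : Type u} [CommRing R]

/-- The localization `Z_y`. -/
abbrev Loc (y : R) (Z : Type u) [AddCommGroup Z] [Module R Z] : Type u :=
  LocalizedModule (Submonoid.powers y) Z

variable (y : R) {Z Z' Z'' : Type u} [AddCommGroup Z] [Module R Z]
  [AddCommGroup Z'] [Module R Z'] [AddCommGroup Z''] [Module R Z'']

/-- The map `z ↦ z / y ^ n` into the localization `Z_y`. -/
noncomputable def frac (n : ℕ) : Z →ₗ[R] Loc y Z :=
  LocalizedModule.divBy ⟨y ^ n, n, rfl⟩ ∘ₗ LocalizedModule.mkLinearMap _ Z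

theorem frac_apply (n : ℕ) (z : Z) :
    frac y n z = LocalizedModule.mk z (⟨y ^ n, n, rfl⟩ : Submonoid.powers y) := by
  simp only [frac, LinearMap.comp_apply, LocalizedModule.mkLinearMap_apply,
    LocalizedModule.divBy_apply, LocalizedModule.liftOn_mk, one_mul]

theorem frac_surj (w : Loc y Z) : ∃ n z, frac y n z = w := by
  induction w using LocalizedModule.induction_on with
  | h z s =>
    obtain ⟨s, n, rfl⟩ := s
    exact ⟨n, z, frac_apply y n z⟩

theorem frac_eq_zero {n : ℕ} {z : Z} (h : frac y n z = 0) : ∃ k, y ^ k • z = 0 := by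
  rw [frac_apply, ← LocalizedModule.zero_mk 1, LocalizedModule.mk_eq] at h
  obtain ⟨⟨s, k, hk⟩, h2⟩ := h
  refine ⟨k, ?_⟩
  simpa [Submonoid.smul_def, ← hk] using h2

theorem pow_smul_frac (n k : ℕ) (z : Z) : y ^ k • frac y (n + k) z = frac y n z := by
  rw [frac_apply, frac_apply, LocalizedModule.smul'_mk, LocalizedModule.mk_eq]
  refine ⟨1, ?_⟩
  simp only [one_smul, Submonoid.smul_def, smul_smul, ← pow_add]

theorem smul_frac (n : ℕ) (z : Z) : y • frac y (n + 1) z = frac y n z := by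
  simpa using pow_smul_frac y n 1 z

theorem frac_add (n k : ℕ) (z : Z) : frac y (n + k) (y ^ k • z) = frac y n z := by
  rw [map_smul, pow_smul_frac]

theorem pow_smul_frac_self (n : ℕ) (z : Z) : y ^ n • frac y n z = frac y 0 z := by
  simpa using pow_smul_frac y 0 n z

theorem loc_smul_inj : Function.Injective fun w : Loc y Z => y • w := by
  have : Function.Injective (LinearMap.lsmul R (Loc y Z) y) := by
    rw [← LinearMap.ker_eq_bot, LinearMap.ker_eq_bot']
    intro w hw
    obtain ⟨n, z, rfl⟩ := frac_surj y w
    rw [LinearMap.lsmul_apply, ← map_smul] at hw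
    obtain ⟨k, hk⟩ := frac_eq_zero y hw
    rw [smul_smul, ← pow_succ] at hk
    rw [← frac_add y n (k+1), hk, map_zero]
  exact this

theorem loc_pow_smul_inj (k : ℕ) : Function.Injective fun w : Loc y Z => y ^ k • w := by
  induction k with
  | zero => intro a b h; simpa using h
  | succ k ih =>
    intro a b h
    simp only [pow_succ', mul_smul] at h
    exact ih (loc_smul_inj y h)

/-- Functoriality of localization. -/
noncomputable def Loc.map (f : Z →ₗ[R] Z') : Loc y Z →ₗ[R] Loc y Z' :=
  IsLocalizedModule.map (Submonoid.powers y) (LocalizedModule.mkLinearMap _ Z)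
    (LocalizedModule.mkLinearMap _ Z') f

theorem Loc.map_frac (f : Z →ₗ[R] Z') (n : ℕ) (z : Z) :
    Loc.map y f (frac y n z) = frac y n (f z) := by
  rw [frac_apply, frac_apply, Loc.map, IsLocalizedModule.map_LocalizedModules]

theorem Loc.map_comp (f : Z →ₗ[R] Z') (g : Z' →ₗ[R] Z'') :
    Loc.map y (g ∘ₗ f) = Loc.map y g ∘ₗ Loc.map y f := by
  ext w
  obtain ⟨n, z, rfl⟩ := frac_surj y w
  simp [Loc.map_frac]

theorem Loc.map_inj {f : Z →ₗ[R] Z'} (hf : Function.Injective f) :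
    Function.Injective (Loc.map y f) :=
  IsLocalizedModule.map_injective _ _ _ f hf

theorem Loc.map_surj {f : Z →ₗ[R] Z'} (hf : Function.Surjective f) :
    Function.Surjective (Loc.map y f) :=
  IsLocalizedModule.map_surjective _ _ _ f hf

theorem Loc.map_exact {f : Z →ₗ[R] Z'} {g : Z' →ₗ[R] Z''} (h : Function.Exact f g) :
    Function.Exact (Loc.map y f) (Loc.map y g) :=
  IsLocalizedModule.map_exact _ _ _ _ f g h

theorem Loc.map_smul_id (r : R) :
    Loc.map y (r • LinearMap.id : Z →ₗ[R] Z) = r • LinearMap.id := by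
  ext w
  obtain ⟨n, z, rfl⟩ := frac_surj y w
  simp [Loc.map_frac]

theorem Loc.map_zero : Loc.map y (0 : Z →ₗ[R] Z') = 0 := by
  ext w
  obtain ⟨n, z, rfl⟩ := frac_surj y w
  simp [Loc.map_frac]

theorem Loc.subsingleton [Subsingleton Z] : Subsingleton (Loc y Z) := by
  refine ⟨fun a b => ?_⟩
  obtain ⟨n, z, rfl⟩ := frac_surj y a
  obtain ⟨m, z', rfl⟩ := frac_surj y b
  simp [Subsingleton.elim z 0, Subsingleton.elim z' 0]

/-- The cokernel `Z_y / im Z` of the localization map. -/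
abbrev Q (y : R) (Z : Type u) [AddCommGroup Z] [Module R Z] : Type u :=
  Loc y Z ⧸ LinearMap.range (frac y 0 : Z →ₗ[R] Loc y Z)

/-- The class of `z / y ^ n` in `Z_y / im Z`. -/
noncomputable def qf (n : ℕ) : Z →ₗ[R] Q y Z := Submodule.mkQ _ ∘ₗ frac y n

theorem qf_surj (w : Q y Z) : ∃ n z, qf y n z = w := by
  obtain ⟨w, rfl⟩ := Submodule.mkQ_surjective _ w
  obtain ⟨n, z, rfl⟩ := frac_surj y w
  exact ⟨n, z, rfl⟩

theorem qf_eq_zero {n : ℕ} {z : Z} (h : qf y n z = 0) :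
    ∃ k z', y ^ k • z = y ^ (n + k) • z' := by
  simp only [qf, LinearMap.comp_apply, Submodule.mkQ_apply, Submodule.Quotient.mk_eq_zero] at h
  obtain ⟨z', h⟩ := h
  have : frac y n (y ^ n • z' - z) = 0 := by
    rw [map_sub, map_smul, pow_smul_frac_self, h, sub_self]
  obtain ⟨k, hk⟩ := frac_eq_zero y this
  rw [smul_sub, sub_eq_zero, smul_smul] at hk
  exact ⟨k, z', by rw [← hk, pow_add, mul_comm]⟩

theorem qf_zero (z : Z) : qf y 0 z = 0 := by
  simp [qf, Submodule.Quotient.mk_eq_zero]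

theorem pow_smul_qf (n k : ℕ) (z : Z) : y ^ k • qf y (n + k) z = qf y n z := by
  rw [qf, LinearMap.comp_apply, ← map_smul, pow_smul_frac]; rfl

theorem smul_qf (n : ℕ) (z : Z) : y • qf y (n + 1) z = qf y n z := by
  simpa using pow_smul_qf y n 1 z

theorem qf_add (n k : ℕ) (z : Z) : qf y (n + k) (y ^ k • z) = qf y n z := by
  rw [map_smul, pow_smul_qf]

theorem pow_smul_qf_self (n : ℕ) (z : Z) : y ^ n • qf y n z = 0 := by
  have := pow_smul_qf y 0 n z
  rwa [zero_add, qf_zero] at this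

theorem Q_torsion (w : Q y Z) : ∃ n, y ^ n • w = 0 := by
  obtain ⟨n, z, rfl⟩ := qf_surj y w
  exact ⟨n, pow_smul_qf_self y n z⟩

/-- The `y`-torsion of `Z_y / im Z` consists of the classes `z / y`. -/
theorem qf_one_of_smul_eq_zero {w : Q y Z} (h : y • w = 0) : ∃ z, qf y 1 z = w := by
  obtain ⟨w, rfl⟩ := Submodule.mkQ_surjective _ w
  rw [← map_smul, Submodule.mkQ_apply, Submodule.Quotient.mk_eq_zero] at h
  obtain ⟨z, hz⟩ := h
  refine ⟨z, ?_⟩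
  rw [qf, LinearMap.comp_apply]
  congr 1
  apply loc_smul_inj y
  simp only
  rw [← hz, smul_frac y 0]

theorem Q_subsingleton_of_unit (hy : IsUnit y) : Subsingleton (Q y Z) := by
  refine subsingleton_of_forall_eq 0 fun w => ?_
  obtain ⟨n, hn⟩ := Q_torsion y w
  exact (hy.pow n).smul_eq_zero.1 hn

theorem Q_subsingleton_of_kill (hy : ∀ z : Z, y • z = 0) : Subsingleton (Q y Z) := by
  refine subsingleton_of_forall_eq 0 fun w => ?_
  obtain ⟨n, z, rfl⟩ := qf_surj y w
  rw [← qf_add y n 1]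
  simp [hy]

theorem Q_subsingleton [Subsingleton Z] : Subsingleton (Q y Z) :=
  Q_subsingleton_of_kill y fun _ => Subsingleton.elim _ _

/-- Functoriality of `Q`; as a cokernel it is right exact (`Q.map_exact`). -/
noncomputable def Q.map (f : Z →ₗ[R] Z') : Q y Z →ₗ[R] Q y Z' :=
  Submodule.mapQ _ _ (Loc.map y f) (by
    rintro _ ⟨z, rfl⟩
    exact ⟨f z, (Loc.map_frac y f 0 z).symm⟩)

theorem Q.map_qf (f : Z →ₗ[R] Z') (n : ℕ) (z : Z) :
    Q.map y f (qf y n z) = qf y n (f z) := by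
  simp [Q.map, qf, Loc.map_frac]

theorem Q.map_surj {f : Z →ₗ[R] Z'} (hf : Function.Surjective f) :
    Function.Surjective (Q.map y f) := by
  intro w
  obtain ⟨n, z, rfl⟩ := qf_surj y w
  obtain ⟨z, rfl⟩ := hf z
  exact ⟨qf y n z, Q.map_qf y f n z⟩

theorem Q.map_exact {f : Z →ₗ[R] Z'} {g : Z' →ₗ[R] Z''} (h : Function.Exact f g)
    (hg : Function.Surjective g) :
    Function.Exact (Q.map y f) (Q.map y g) := by
  intro w
  constructor
  · intro hw
    obtain ⟨n, z, rfl⟩ := qf_surj y w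
    rw [Q.map_qf] at hw
    obtain ⟨k, z', hk⟩ := qf_eq_zero y hw
    obtain ⟨z', rfl⟩ := hg z'
    have : g (y ^ k • z - y ^ (n + k) • z') = 0 := by simp [hk]
    obtain ⟨a, ha⟩ := (h _).1 this
    refine ⟨qf y (n + k) a, ?_⟩
    rw [Q.map_qf, ha, map_sub, qf_add, map_smul, pow_smul_qf_self, sub_zero]
  · rintro ⟨w, rfl⟩
    obtain ⟨n, z, rfl⟩ := qf_surj y w
    rw [Q.map_qf, Q.map_qf, h.apply_apply_eq_zero, _root_.map_zero]

end Loc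

/-! ### Limit closures of the powers of a list of elements -/

section InLam

variable {R : Type u} [CommRing R]

/-- The ideal generated by the `n`-th powers of the members of `l`. -/
def pI (l : List R) (n : ℕ) : Ideal R := Ideal.span ((fun y => y ^ n) '' {y | y ∈ l})

theorem pow_mem_pI {l : List R} {y : R} (hy : y ∈ l) (n : ℕ) : y ^ n ∈ pI l n :=
  Ideal.subset_span ⟨y, hy, rfl⟩

theorem pI_nil (n : ℕ) : pI ([] : List R) n = ⊥ := by simp [pI]

theorem pI_cons (y : R) (l : List R) (n : ℕ) : pI (y :: l) n = Ideal.span {y ^ n} ⊔ pI l n := by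
  rw [pI, pI, ← Ideal.span_union, ← Set.image_singleton (f := fun y : R => y ^ n),
    ← Set.image_union]
  congr 2
  ext; simp

theorem pI_le_one (l : List R) {n : ℕ} (hn : n ≠ 0) : pI l n ≤ pI l 1 := by
  refine Ideal.span_le.2 ?_
  rintro _ ⟨y, hy, rfl⟩
  exact Ideal.pow_mem_of_mem _ (by simpa using pow_mem_pI hy 1) n (Nat.pos_of_ne_zero hn)

theorem prod_mul_pI (l : List R) (n : ℕ) {r : R} (hr : r ∈ pI l n) :
    l.prod * r ∈ pI l (n + 1) := by
  suffices pI l n ≤ Submodule.comap (LinearMap.lsmul R R l.prod) (pI l (n + 1)) from this hr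
  refine Ideal.span_le.2 ?_
  rintro _ ⟨y, hy, rfl⟩
  obtain ⟨c, hc⟩ := List.dvd_prod hy
  change l.prod * y ^ n ∈ pI l (n + 1)
  rw [hc, show y * c * y ^ n = c * y ^ (n + 1) by ring]
  exact Ideal.mul_mem_left _ _ (pow_mem_pI hy _)

variable {M : Type v} [AddCommGroup M] [Module R M] {M' : Type w} [AddCommGroup M'] [Module R M']

theorem prod_smul_pI (l : List R) (n : ℕ) {u : M} (hu : u ∈ pI l n • (⊤ : Submodule R M)) :
    l.prod • u ∈ pI l (n + 1) • (⊤ : Submodule R M) := by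
  induction hu using Submodule.smul_induction_on' with
  | smul r hr m hm =>
    rw [smul_smul]
    exact Submodule.smul_mem_smul (prod_mul_pI l n hr) trivial
  | add x _ y _ hx hy => rw [smul_add]; exact add_mem hx hy

theorem prod_pow_smul_pI (l : List R) (n k : ℕ) {u : M}
    (hu : u ∈ pI l n • (⊤ : Submodule R M)) :
    l.prod ^ k • u ∈ pI l (n + k) • (⊤ : Submodule R M) := by
  induction k with
  | zero => simpa using hu
  | succ k ih => rw [pow_succ', mul_smul]; exact prod_smul_pI l _ ih

/-- `u` lies in the limit closure of the sequence of `n`-th powers of the members of `l`. -/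
def InLam (l : List R) (n : ℕ) (u : M) : Prop :=
  ∃ k, l.prod ^ k • u ∈ pI l (n + k) • (⊤ : Submodule R M)

theorem InLam.mono {l : List R} {n : ℕ} {u : M} {k : ℕ}
    (h : l.prod ^ k • u ∈ pI l (n + k) • (⊤ : Submodule R M)) {k' : ℕ} (hk : k ≤ k') :
    l.prod ^ k' • u ∈ pI l (n + k') • (⊤ : Submodule R M) := by
  obtain ⟨j, rfl⟩ := Nat.exists_eq_add_of_le hk
  rw [add_comm k j, pow_add, mul_smul, show n + (j + k) = n + k + j by ring]
  exact prod_pow_smul_pI l _ _ h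

theorem InLam.map {l : List R} {n : ℕ} {u : M} (h : InLam l n u) (f : M →ₗ[R] M') :
    InLam l n (f u) := by
  obtain ⟨k, hk⟩ := h
  refine ⟨k, ?_⟩
  have := Submodule.mem_map_of_mem (f := f) hk
  rw [Submodule.map_smul'', map_smul] at this
  exact Submodule.smul_mono le_rfl le_top this

theorem InLam.smul {l : List R} {n : ℕ} {u : M} (h : InLam l n u) (r : R) : InLam l n (r • u) :=
  h.map (r • LinearMap.id)

theorem mem_pI_cons {y : R} {l : List R} {n : ℕ} {u : M} :
    u ∈ pI (y :: l) n • (⊤ : Submodule R M) ↔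
      ∃ a, ∃ b ∈ pI l n • (⊤ : Submodule R M), u = y ^ n • a + b := by
  rw [pI_cons, Submodule.sup_smul, Submodule.mem_sup]
  constructor
  · rintro ⟨a, ha, b, hb, rfl⟩
    rw [Submodule.ideal_span_singleton_smul] at ha
    obtain ⟨a, -, rfl⟩ := ha
    exact ⟨a, b, hb, rfl⟩
  · rintro ⟨a, b, hb, rfl⟩
    exact ⟨y ^ n • a, Submodule.smul_mem_smul (Ideal.mem_span_singleton_self _) trivial, b, hb, rfl⟩

end InLam

/-! ### Top local cohomology -/

section Top

variable {R : Type u} [CommRing R] {M M' M'' : Type u} [AddCommGroup M] [Module R M]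
  [AddCommGroup M'] [Module R M'] [AddCommGroup M''] [Module R M'']

/-- The top local cohomology `H^r_{(x₁, …, x_r)}(M)`, as an iterated cokernel of localizations. -/
noncomputable def Top (M : Type u) [AddCommGroup M] [Module R M] : List R → ModuleCat.{u} R
  | [] => ModuleCat.of R M
  | y :: l => ModuleCat.of R (Q y (Top M l))

/-- The class of `u / (x₁ ⋯ x_r) ^ n` in the top local cohomology. -/
noncomputable def hh : (l : List R) → (n : ℕ) → M →ₗ[R] Top M l
  | [], _ => LinearMap.id
  | y :: l, n => (qf y n : Top M l →ₗ[R] Q y (Top M l)) ∘ₗ hh l n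

/-- Functoriality of `Top`. -/
noncomputable def Top.map (f : M →ₗ[R] M') : (l : List R) → Top M l →ₗ[R] Top M' l
  | [] => f
  | y :: l => Q.map y (Top.map f l)

theorem hh_prod (l : List R) (n k : ℕ) (u : M) : l.prod ^ k • hh l (n + k) u = hh l n u := by
  induction l with
  | nil => simp [hh]
  | cons y l ih =>
    change (y * l.prod) ^ k • qf y (n + k) (hh l (n + k) u) = qf y n (hh l n u)
    rw [mul_pow, mul_smul, ← map_smul (qf y (n + k)), ih, pow_smul_qf]

theorem hh_add (l : List R) (n k : ℕ) (u : M) : hh l (n + k) (l.prod ^ k • u) = hh l n u := by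
  rw [map_smul, hh_prod]

theorem hh_surj (l : List R) (w : Top M l) : ∃ n u, hh l n u = w := by
  induction l with
  | nil => exact ⟨0, w, rfl⟩
  | cons y l ih =>
    obtain ⟨n, z, rfl⟩ := qf_surj y (w : Q y (Top M l))
    obtain ⟨m, u, rfl⟩ := ih z
    refine ⟨n + m, y ^ m • l.prod ^ n • u, ?_⟩
    change qf y (n + m) (hh l (n + m) _) = _
    rw [map_smul, qf_add, add_comm n m, hh_add]

theorem hh_map (f : M →ₗ[R] M') (l : List R) (n : ℕ) (u : M) :
    Top.map f l (hh l n u) = hh l n (f u) := by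
  induction l with
  | nil => rfl
  | cons y l ih =>
    change Q.map y (Top.map f l) (qf y n (hh l n u)) = qf y n (hh l n (f u))
    rw [Q.map_qf, ih]

theorem Top.map_smul_id (r : R) (l : List R) :
    Top.map (r • LinearMap.id : M →ₗ[R] M) l = r • LinearMap.id := by
  ext w
  obtain ⟨n, u, rfl⟩ := hh_surj l w
  simp [hh_map]

theorem Top.map_surj {f : M →ₗ[R] M'} (hf : Function.Surjective f) (l : List R) :
    Function.Surjective (Top.map f l) := by
  intro w
  obtain ⟨n, u, rfl⟩ := hh_surj l w
  obtain ⟨u, rfl⟩ := hf u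
  exact ⟨hh l n u, hh_map f l n u⟩

theorem Top.map_exact {f : M →ₗ[R] M'} {g : M' →ₗ[R] M''} (h : Function.Exact f g)
    (hg : Function.Surjective g) (l : List R) :
    Function.Exact (Top.map f l) (Top.map g l) := by
  induction l with
  | nil => exact h
  | cons y l ih => exact Q.map_exact y ih (Top.map_surj hg l)

theorem Top_kill {r : R} (h : ∀ u : M, r • u = 0) (l : List R) (w : Top M l) : r • w = 0 := by
  obtain ⟨n, u, rfl⟩ := hh_surj l w
  rw [← map_smul, h, map_zero]

theorem Top_subsingleton [Subsingleton M] (l : List R) : Subsingleton (Top M l) := by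
  refine subsingleton_of_forall_eq 0 fun w => ?_
  obtain ⟨n, u, rfl⟩ := hh_surj l w
  rw [Subsingleton.elim u 0, map_zero]

theorem Top_subsingleton_of_unit {l : List R} {y : R} (hy : y ∈ l) (hu : IsUnit y) :
    Subsingleton (Top M l) := by
  induction l with
  | nil => simp at hy
  | cons z l ih =>
    rcases List.mem_cons.1 hy with rfl | hy
    · exact Q_subsingleton_of_unit y hu
    · have := ih hy
      exact Q_subsingleton z

theorem Top_subsingleton_of_kill_cons {y : R} (h : ∀ u : M, y • u = 0) (l : List R) :
    Subsingleton (Top M (y :: l)) :=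
  Q_subsingleton_of_kill y (Top_kill h l)

/-- The kernel of `u ↦ u / (x₁ ⋯ x_r) ^ n` is contained in the limit closure of the `n`-th powers,
so vanishing of the top local cohomology makes this limit closure all of `M`. -/
theorem hh_eq_zero {l : List R} {n : ℕ} {u : M} (h : hh l n u = 0) : InLam l n u := by
  induction l generalizing n u with
  | nil =>
    have h : u = 0 := h
    exact ⟨0, by simp [h]⟩
  | cons y l ih =>
    obtain ⟨k, z, hk⟩ := qf_eq_zero y (show qf y n (hh l n u) = 0 from h)
    obtain ⟨m, v, rfl⟩ := hh_surj l z
    have h0 : hh l (n + k + m) (y ^ k • l.prod ^ (k + m) • u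
        - y ^ (n + k) • l.prod ^ (n + k) • v) = 0 := by
      have h1 := hh_add l n (k + m) u
      have h2 := hh_add l m (n + k) v
      rw [← add_assoc] at h1
      rw [add_comm] at h2
      rw [map_sub, map_smul, map_smul _ (y ^ (n + k)), h1, h2, hk, sub_self]
    obtain ⟨j, hj⟩ := ih h0
    refine ⟨k + m + j, mem_pI_cons.2 ⟨l.prod ^ (n + k + j) • v, y ^ (m + j) • _,
      Submodule.smul_mem _ _ (?_ : l.prod ^ j • (y ^ k • l.prod ^ (k + m) • u
        - y ^ (n + k) • l.prod ^ (n + k) • v) ∈ _), ?_⟩⟩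
    · convert hj using 3; ring
    · rw [List.prod_cons]
      module

/-- If `M --y--> M --g--> N → 0` is exact then the `y`-torsion of `Top M (y :: l)` is a
quotient of `Top N l`. -/
theorem exists_theta {y : R} {N : Type u} [AddCommGroup N] [Module R N] (g : M →ₗ[R] N)
    (hg : Function.Surjective g) (hex : Function.Exact (y • LinearMap.id : M →ₗ[R] M) g)
    (l : List R) :
    ∃ θ : Top N l →ₗ[R] Top M (y :: l), ∀ w : Top M (y :: l), y • w = 0 → ∃ v, θ v = w := by
  have hs := Top.map_surj hg l
  have hker : LinearMap.ker (Top.map g l) ≤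
      LinearMap.ker (qf y 1 : Top M l →ₗ[R] Q y (Top M l)) := by
    intro w hw
    obtain ⟨w, rfl⟩ := (Top.map_exact hex hg l w).1 hw
    rw [Top.map_smul_id, LinearMap.mem_ker]
    change qf y 1 (y • w) = 0
    rw [map_smul, smul_qf y 0, qf_zero]
  refine ⟨(Submodule.liftQ _ (qf y 1 : Top M l →ₗ[R] Q y (Top M l)) hker) ∘ₗ
    ((Top.map g l).quotKerEquivOfSurjective hs).symm.toLinearMap, fun w hw => ?_⟩
  obtain ⟨z, hz⟩ := qf_one_of_smul_eq_zero y (w := (w : Q y (Top M l))) hw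
  refine ⟨Top.map g l z, ?_⟩
  rw [LinearMap.comp_apply, LinearEquiv.coe_coe,
    LinearMap.quotKerEquivOfSurjective_symm_apply]
  exact hz

theorem Top_torsion (y : R) (l : List R) (w : Top M (y :: l)) : ∃ n, y ^ n • w = 0 :=
  Q_torsion y (w : Q y (Top M l))

end Top

/-! ### Melkersson's criterion for Artinian modules -/

section Artin

variable {R : Type u} [CommRing R] {V : Type v} [AddCommGroup V] [Module R V]

/-- The submodule `y ^ j U ∩ (0 :_V y)` of the `y`-torsion of `V`. -/
def DD (y : R) (j : ℕ) (U : Submodule R V) : Submodule R (Submodule.torsionBy R V y) :=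
  (U.map (LinearMap.lsmul R V (y ^ j))).comap (Submodule.subtype _)

theorem mem_DD {y : R} {j : ℕ} {U : Submodule R V} {s : Submodule.torsionBy R V y} :
    s ∈ DD y j U ↔ ∃ u ∈ U, y ^ j • u = (s : V) := by
  simp [DD]

theorem DD_mono (y : R) (j : ℕ) {U U' : Submodule R V} (h : U ≤ U') : DD y j U ≤ DD y j U' := by
  intro s hs
  obtain ⟨u, hu, h'⟩ := mem_DD.1 hs
  exact mem_DD.2 ⟨u, h hu, h'⟩

theorem DD_anti (y : R) {j j' : ℕ} (hj : j ≤ j') (U : Submodule R V) :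
    DD y j' U ≤ DD y j U := by
  intro s hs
  obtain ⟨u, hu, h'⟩ := mem_DD.1 hs
  obtain ⟨k, rfl⟩ := Nat.exists_eq_add_of_le hj
  exact mem_DD.2 ⟨y ^ k • u, U.smul_mem _ hu, by rw [smul_smul, ← pow_add, h']⟩

/-- Melkersson's criterion for a principal ideal: a `y`-power torsion module with Artinian
`y`-torsion is Artinian. -/
theorem isArtinian_of_torsion (y : R) (htor : ∀ v : V, ∃ n, y ^ n • v = 0)
    (hker : IsArtinian R (Submodule.torsionBy R V y)) : IsArtinian R V := by
  rw [← monotone_stabilizes_iff_artinian] at hker ⊢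
  intro U0
  set U : ℕ → Submodule R V := fun n => OrderDual.ofDual (U0 n) with hUdef
  have hU : ∀ {i j : ℕ}, i ≤ j → U j ≤ U i := fun {i j} h => U0.monotone h
  -- The diagonal chain `DD y n (U n)` controls all large exponents `j` at once; the finitely many
  -- small `j` are handled by the chains `DD y j (U ·)`.
  obtain ⟨n0, hn0⟩ := hker ⟨fun n => OrderDual.toDual (DD y n (U n)),
    fun a b hab => (DD_anti y hab _).trans (DD_mono y a (hU hab))⟩
  have hst : ∀ j, ∃ i0, ∀ i, i0 ≤ i → DD y j (U i0) =
      DD y j (U i) := fun j =>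
    hker ⟨fun n => OrderDual.toDual (DD y j (U n)),
      fun a b hab => DD_mono y j (hU hab)⟩
  choose i0 hi0 using hst
  have hn0' : ∀ n, n0 ≤ n → DD y n0 (U n0) = DD y n (U n) := hn0
  set i1 := n0 + (Finset.range n0).sup i0 with hi1
  have key : ∀ j i, i1 ≤ i → DD y j (U i1) ≤ DD y j (U i) := by
    intro j i hi
    rcases lt_or_ge j n0 with hj | hj
    · have h1 : i0 j ≤ i1 :=
        (Finset.le_sup (f := i0) (Finset.mem_range.2 hj)).trans (Nat.le_add_left _ _)
      rw [← hi0 j i1 h1, ← hi0 j i (h1.trans hi)]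
    · have h1 : DD y j (U i1) ≤ DD y n0 (U n0) :=
        (DD_anti y hj _).trans (DD_mono y _ (hU (Nat.le_add_right _ _)))
      have h2 : n0 ≤ i := (Nat.le_add_right _ _).trans hi
      rw [hn0' (max i j) (h2.trans (le_max_left _ _))] at h1
      exact h1.trans ((DD_anti y (le_max_right _ _) _).trans (DD_mono y _ (hU (le_max_left _ _))))
  refine ⟨i1, fun i hi => le_antisymm (α := Submodule R V) (?_ : U i1 ≤ U i) (hU hi)⟩
  -- By induction on the order `n` of torsion, `v ∈ U i1` is corrected into `U i`.
  intro v hv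
  obtain ⟨n, hn⟩ := htor v
  induction n generalizing v with
  | zero => simp at hn; rw [hn]; exact zero_mem _
  | succ n ih =>
    have hs : y ^ n • v ∈ Submodule.torsionBy R V y := by
      rw [Submodule.mem_torsionBy_iff, smul_smul, ← pow_succ', hn]
    obtain ⟨v', hv', h'⟩ := mem_DD.1 (key n i hi (mem_DD.2 ⟨v, hv, rfl⟩ :
      (⟨_, hs⟩ : Submodule.torsionBy R V y) ∈ _))
    have := ih (v := v - v') (sub_mem hv (hU hi hv')) (by rw [smul_sub, h', sub_self])
    simpa using add_mem this hv'

end Artin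

/-! ### Dévissage -/

section Devissage

variable {R : Type u} [CommRing R] [IsNoetherianRing R]

/-- Dévissage over modules annihilated by `I`: only primes containing `I` occur. -/
theorem devissage (I : Ideal R)
    (P : ∀ (N : Type u) [AddCommGroup N] [Module R N], Prop)
    (h0 : ∀ (N : Type u) [AddCommGroup N] [Module R N], Subsingleton N → P N)
    (hq : ∀ p : Ideal R, p.IsPrime → I ≤ p → P (R ⧸ p))
    (hex : ∀ (N₁ N₂ N₃ : Type u) [AddCommGroup N₁] [Module R N₁] [AddCommGroup N₂] [Module R N₂]
      [AddCommGroup N₃] [Module R N₃] (f : N₁ →ₗ[R] N₂) (g : N₂ →ₗ[R] N₃),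
      Function.Injective f → Function.Surjective g → Function.Exact f g → P N₁ → P N₃ → P N₂)
    (M : Type u) [AddCommGroup M] [Module R M] [hM : Module.Finite R M]
    (hI : ∀ r ∈ I, ∀ u : M, r • u = 0) : P M := by
  have hequiv : ∀ (N₁ N₂ : Type u) [AddCommGroup N₁] [Module R N₁] [AddCommGroup N₂]
      [Module R N₂] (_ : N₁ ≃ₗ[R] N₂), P N₁ → P N₂ := by
    intro N₁ N₂ _ _ _ _ f h
    exact hex N₁ N₂ PUnit f 0 f.injective (Function.surjective_to_subsingleton _)
      ((f.exact_zero_iff_surjective _).2 f.surjective) h (h0 _ inferInstance)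
  refine IsNoetherianRing.induction_on_isQuotientEquivQuotientPrime R hM
    (motive := fun N _ _ _ => (∀ r ∈ I, ∀ u : N, r • u = 0) → P N) ?_ ?_ ?_ hI
  · intro N _ _ _ h _; exact h0 N h
  · intro N _ _ _ p e h
    refine hequiv _ _ e.symm (hq p.1 p.2 ?_)
    intro r hr
    have := h r hr (e.symm (Ideal.Quotient.mk _ 1))
    rw [← map_smul, EmbeddingLike.map_eq_zero_iff] at this
    rw [← Ideal.Quotient.eq_zero_iff_mem]
    simpa [Algebra.smul_def] using this
  · intro N₁ _ _ _ N₂ _ _ _ N₃ _ _ _ f g hf hg hfg h1 h3 h2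
    refine hex N₁ N₂ N₃ f g hf hg hfg (h1 fun r hr u => ?_) (h3 fun r hr u => ?_)
    · apply hf; rw [map_smul, h2 r hr, map_zero]
    · obtain ⟨u, rfl⟩ := hg u
      rw [← map_smul, h2 r hr, map_zero]

end Devissage

/-! ### Dimensions of quotients by primes -/

section Dim

variable {R : Type u} [CommRing R]

theorem dim_succ_le {p q : Ideal R} [hp : p.IsPrime] (h : p < q) :
    ringKrullDim (R ⧸ q) + 1 ≤ ringKrullDim (R ⧸ p) := by
  obtain ⟨hle, r, hr, hr'⟩ := SetLike.lt_iff_le_and_exists.1 h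
  refine ringKrullDim_succ_le_of_surjective (Ideal.Quotient.factor hle)
    (Ideal.Quotient.factor_surjective hle) (r := Ideal.Quotient.mk p r) ?_ ?_
  · rw [mem_nonZeroDivisors_iff_ne_zero, Ne, Ideal.Quotient.eq_zero_iff_mem]; exact hr'
  · rw [Ideal.Quotient.factor_mk, Ideal.Quotient.eq_zero_iff_mem]; exact hr

theorem dim_nonneg (p : Ideal R) [hp : p.IsPrime] : 0 ≤ ringKrullDim (R ⧸ p) :=
  ringKrullDim_nonneg_of_nontrivial

theorem dim_mono {p q : Ideal R} (h : p ≤ q) : ringKrullDim (R ⧸ q) ≤ ringKrullDim (R ⧸ p) :=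
  ringKrullDim_le_of_surjective (Ideal.Quotient.factor h) (Ideal.Quotient.factor_surjective h)

theorem dim_le_of_lt {p q : Ideal R} [hp : p.IsPrime] (h : p < q) {n : ℕ}
    (hn : ringKrullDim (R ⧸ p) ≤ ((n + 1 : ℕ) : WithBot ℕ∞)) :
    ringKrullDim (R ⧸ q) ≤ (n : WithBot ℕ∞) := by
  have := (dim_succ_le h).trans hn
  push_cast at this
  exact ENat.WithBot.add_le_add_one_right_iff.1 this

theorem dim_lt_of_lt {p q : Ideal R} [hp : p.IsPrime] (h : p < q) {n : ℕ}
    (hn : ringKrullDim (R ⧸ p) < ((n + 1 : ℕ) : WithBot ℕ∞)) :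
    ringKrullDim (R ⧸ q) < (n : WithBot ℕ∞) := by
  have := (dim_succ_le h).trans_lt hn
  push_cast at this
  exact lt_of_add_lt_add_right this

theorem isMaximal_of_dim_le_zero {p : Ideal R} [hp : p.IsPrime] (h : ringKrullDim (R ⧸ p) ≤ 0) :
    p.IsMaximal := by
  have : Ring.KrullDimLE 0 (R ⧸ p) := Ring.krullDimLE_iff.2 (by exact_mod_cast h)
  rw [← Ideal.bot_quotient_isMaximal_iff]
  infer_instance

end Dim

/-! ### Vanishing and Artinianness of top local cohomology -/

section Vanish

variable {R : Type u} [CommRing R]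

/-- The surjection `R/I → R/(I + yR)`, whose kernel is the image of multiplication by `y`. -/
noncomputable def quoMap (I : Ideal R) (y : R) : (R ⧸ I) →ₗ[R] (R ⧸ (I ⊔ Ideal.span {y})) :=
  Submodule.factor (le_sup_left : I ≤ I ⊔ Ideal.span {y})

theorem quoMap_surj (I : Ideal R) (y : R) : Function.Surjective (quoMap I y) :=
  Submodule.factor_surjective (le_sup_left : I ≤ I ⊔ Ideal.span {y})

theorem quoMap_exact (I : Ideal R) (y : R) :
    Function.Exact (y • LinearMap.id : (R ⧸ I) →ₗ[R] (R ⧸ I)) (quoMap I y) := by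
  intro w
  obtain ⟨a, rfl⟩ := Submodule.Quotient.mk_surjective _ w
  have h1 : quoMap I y (Submodule.Quotient.mk a) = Submodule.Quotient.mk a := rfl
  rw [h1, Submodule.Quotient.mk_eq_zero, Submodule.mem_sup]
  constructor
  · rintro ⟨i, hi, b, hb, rfl⟩
    obtain ⟨c, rfl⟩ := Ideal.mem_span_singleton'.1 hb
    refine ⟨Submodule.Quotient.mk c, ?_⟩
    simp only [LinearMap.smul_apply, LinearMap.id_apply]
    rw [← Submodule.Quotient.mk_smul, Submodule.Quotient.eq, smul_eq_mul]
    rw [show y * c - (i + c * y) = -i by ring]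
    exact neg_mem hi
  · rintro ⟨c, hc⟩
    obtain ⟨c, rfl⟩ := Submodule.Quotient.mk_surjective _ c
    simp only [LinearMap.smul_apply, LinearMap.id_apply] at hc
    rw [← Submodule.Quotient.mk_smul, Submodule.Quotient.eq, smul_eq_mul] at hc
    exact ⟨a - c * y, by rw [← neg_mem_iff]; convert hc using 1; ring, c * y,
      Ideal.mem_span_singleton'.2 ⟨c, rfl⟩, by ring⟩

theorem quo_kill {I : Ideal R} {r : R} (hr : r ∈ I) (u : R ⧸ I) : r • u = 0 := by
  obtain ⟨a, rfl⟩ := Submodule.Quotient.mk_surjective _ u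
  rw [← Submodule.Quotient.mk_smul, Submodule.Quotient.mk_eq_zero]
  exact Ideal.mul_mem_right _ _ hr

/-- Vanishing of top local cohomology lifts from `M / y M` and `l` to `M` and `y :: l`: the
`y`-torsion vanishes by `exists_theta`, and everything is `y`-power torsion. -/
theorem subsingleton_of_theta {M N : Type u} [AddCommGroup M] [Module R M] {y : R}
    [AddCommGroup N] [Module R N] (g : M →ₗ[R] N)
    (hg : Function.Surjective g) (hex : Function.Exact (y • LinearMap.id : M →ₗ[R] M) g)
    (l : List R) (h : Subsingleton (Top N l)) : Subsingleton (Top M (y :: l)) := by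
  obtain ⟨θ, hθ⟩ := exists_theta g hg hex l
  refine subsingleton_of_forall_eq 0 fun w => ?_
  obtain ⟨n, hn⟩ := Top_torsion y l w
  induction n with
  | zero => simpa using hn
  | succ n ih =>
    rw [pow_succ', mul_smul] at hn
    obtain ⟨v, hv⟩ := hθ _ hn
    exact ih (by rw [← hv, Subsingleton.elim v 0, map_zero])

theorem Top_exact_subsingleton {N₁ N₂ N₃ : Type u} [AddCommGroup N₁] [Module R N₁]
    [AddCommGroup N₂] [Module R N₂] [AddCommGroup N₃] [Module R N₃]
    {f : N₁ →ₗ[R] N₂} {g : N₂ →ₗ[R] N₃}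
    (hg : Function.Surjective g) (hfg : Function.Exact f g) (l : List R)
    (h1 : Subsingleton (Top N₁ l)) (h3 : Subsingleton (Top N₃ l)) : Subsingleton (Top N₂ l) := by
  refine subsingleton_of_forall_eq 0 fun w => ?_
  obtain ⟨v, rfl⟩ := (Top.map_exact hfg hg l w).1 (Subsingleton.elim _ _)
  rw [Subsingleton.elim v 0, map_zero]

theorem lt_sup_span {q p : Ideal R} {y : R} (hy : y ∉ q) (h : q ⊔ Ideal.span {y} ≤ p) : q < p :=
  lt_of_le_of_ne (le_sup_left.trans h) fun he =>
    hy (he ▸ h (Ideal.mem_sup_right (Ideal.mem_span_singleton_self y)))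

/-- Artinianness of top local cohomology lifts from `M / y M` and `l` to `M` and `y :: l`. -/
theorem isArtinian_of_theta {M N : Type u} [AddCommGroup M] [Module R M] {y : R}
    [AddCommGroup N] [Module R N] (g : M →ₗ[R] N)
    (hg : Function.Surjective g) (hex : Function.Exact (y • LinearMap.id : M →ₗ[R] M) g)
    (l : List R) (h : IsArtinian R (Top N l)) : IsArtinian R (Top M (y :: l)) := by
  obtain ⟨θ, hθ⟩ := exists_theta g hg hex l
  refine isArtinian_of_torsion y (Top_torsion y l) ?_
  have h1 : IsArtinian R (LinearMap.range θ) :=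
    isArtinian_of_surjective _ θ.rangeRestrict θ.surjective_rangeRestrict
  have hle : Submodule.torsionBy R (Top M (y :: l)) y ≤ LinearMap.range θ := by
    intro w hw
    exact hθ w ((Submodule.mem_torsionBy_iff _ _).1 hw)
  exact isArtinian_of_le hle

theorem Top_exact_artinian {N₁ N₂ N₃ : Type u} [AddCommGroup N₁] [Module R N₁]
    [AddCommGroup N₂] [Module R N₂] [AddCommGroup N₃] [Module R N₃]
    {f : N₁ →ₗ[R] N₂} {g : N₂ →ₗ[R] N₃}
    (hg : Function.Surjective g) (hfg : Function.Exact f g) (l : List R)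
    (h1 : IsArtinian R (Top N₁ l)) (h3 : IsArtinian R (Top N₃ l)) : IsArtinian R (Top N₂ l) :=
  isArtinian_of_range_eq_ker _ _ (LinearMap.exact_iff.1 (Top.map_exact hfg hg l)).symm

variable [IsNoetherianRing R]

/-- Top local cohomology vanishes for modules of dimension smaller than the number of elements. -/
theorem Top_vanish (l : List R) : ∀ (I : Ideal R) (M : Type u) [AddCommGroup M] [Module R M]
    [Module.Finite R M], (∀ r ∈ I, ∀ u : M, r • u = 0) →
    (∀ p : Ideal R, p.IsPrime → I ≤ p → ringKrullDim (R ⧸ p) < (l.length : WithBot ℕ∞)) →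
    Subsingleton (Top M l) := by
  induction l with
  | nil =>
    intro I M _ _ _ hI hd
    refine devissage I (fun N _ _ => Subsingleton (Top N ([] : List R)))
      (fun N _ _ h => Top_subsingleton _) ?_ ?_ M hI
    · intro p hp hIp
      exact absurd (hd p hp hIp) (not_lt.2 (by simpa using dim_nonneg p))
    · intro N₁ N₂ N₃ _ _ _ _ _ _ f g hf hg hfg h1 h3
      exact Top_exact_subsingleton hg hfg _ h1 h3
  | cons y l ih =>
    intro I M _ _ _ hI hd
    refine devissage I (fun N _ _ => Subsingleton (Top N (y :: l)))
      (fun N _ _ h => Top_subsingleton _) ?_ ?_ M hI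
    · intro q hq hIq
      by_cases hy : y ∈ q
      · exact Top_subsingleton_of_kill_cons (quo_kill hy) l
      · refine subsingleton_of_theta (quoMap q y) (quoMap_surj q y) (quoMap_exact q y) l
          (ih _ _ (fun r hr u => quo_kill hr u) fun p hp hle => ?_)
        exact dim_lt_of_lt (lt_sup_span hy hle) (hd q hq hIq)
    · intro N₁ N₂ N₃ _ _ _ _ _ _ f g hf hg hfg h1 h3
      exact Top_exact_subsingleton hg hfg _ h1 h3

/-- Top local cohomology is Artinian if the dimension is at most the number of elements. -/
theorem Top_artinian (l : List R) : ∀ (I : Ideal R) (M : Type u) [AddCommGroup M] [Module R M]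
    [Module.Finite R M], (∀ r ∈ I, ∀ u : M, r • u = 0) →
    (∀ p : Ideal R, p.IsPrime → I ≤ p → ringKrullDim (R ⧸ p) ≤ (l.length : WithBot ℕ∞)) →
    IsArtinian R (Top M l) := by
  induction l with
  | nil =>
    intro I M _ _ _ hI hd
    refine devissage I (fun N _ _ => IsArtinian R (Top N ([] : List R)))
      (fun N _ _ h => have := Top_subsingleton (M := N) ([] : List R); inferInstance) ?_ ?_ M hI
    · intro p hp hIp
      have hm : p.IsMaximal := isMaximal_of_dim_le_zero (by simpa using hd p hp hIp)
      have : IsSimpleModule R (R ⧸ p) :=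
        isSimpleModule_iff_isCoatom.2 (Ideal.isMaximal_def.1 hm)
      exact (inferInstance : IsArtinian R (R ⧸ p))
    · intro N₁ N₂ N₃ _ _ _ _ _ _ f g hf hg hfg h1 h3
      exact Top_exact_artinian hg hfg _ h1 h3
  | cons y l ih =>
    intro I M _ _ _ hI hd
    refine devissage I (fun N _ _ => IsArtinian R (Top N (y :: l)))
      (fun N _ _ h => have := Top_subsingleton (M := N) (y :: l); inferInstance) ?_ ?_ M hI
    · intro q hq hIq
      by_cases hy : y ∈ q
      · have := Top_subsingleton_of_kill_cons (M := R ⧸ q) (quo_kill hy) l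
        infer_instance
      · refine isArtinian_of_theta (quoMap q y) (quoMap_surj q y) (quoMap_exact q y) l
          (ih _ _ (fun r hr u => quo_kill hr u) fun p hp hle => ?_)
        exact dim_le_of_lt (lt_sup_span hy hle) (hd q hq hIq)
    · intro N₁ N₂ N₃ _ _ _ _ _ _ f g hf hg hfg h1 h3
      exact Top_exact_artinian hg hfg _ h1 h3

end Vanish

/-! ### Extending maps into injective modules -/

section Factor

variable {R : Type u} [CommRing R] {A B : Type u} [AddCommGroup A] [Module R A]
  [AddCommGroup B] [Module R B]

/-- A map into an injective module extends along any map whose kernel it kills. -/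
theorem exists_factor {Q0 : Type u} [AddCommGroup Q0] [Module R Q0] [Module.Injective R Q0]
    (a : A →ₗ[R] B) (b : A →ₗ[R] Q0)
    (h : LinearMap.ker a ≤ LinearMap.ker b) : ∃ g : B →ₗ[R] Q0, ∀ x, g (a x) = b x := by
  obtain ⟨g, hg⟩ := Module.Injective.out (R := R) (Q := Q0) (Submodule.liftQ _ a le_rfl)
    (LinearMap.ker_eq_bot.1 (Submodule.ker_liftQ_eq_bot _ _ _ le_rfl)) (Submodule.liftQ _ b h)
  refine ⟨g, fun x => ?_⟩
  simpa using hg (Submodule.Quotient.mk x)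

end Factor

/-! ### Matlis duality for modules of finite length -/

section Hull

variable (R : Type u) [CommRing R] [IsLocalRing R]

/-- A substitute for the injective hull of the residue field: inside an injective module `Q0`, a
submodule `E` whose socle is the line spanned by the nonzero element `e0`, and which is as large as
this allows.  Only a consequence of maximality is recorded, `mem_sub`: an element `v` of `Q0` with
`m v ⊆ E` lies in `E` up to a socle element of `Q0`. -/
structure Hull where
  Q0 : Type u
  [grp : AddCommGroup Q0]
  [mod : Module R Q0]
  [inj : Module.Injective R Q0]
  E : Submodule R Q0
  e0 : Q0
  e0_mem : e0 ∈ E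
  e0_ne : e0 ≠ 0
  e0_kill : ∀ r ∈ maximalIdeal R, r • e0 = 0
  socle : ∀ v ∈ E, (∀ r ∈ maximalIdeal R, r • v = 0) → v ∈ Submodule.span R {e0}
  mem_sub : ∀ v, (∀ r ∈ maximalIdeal R, r • v ∈ E) →
    ∃ w, (∀ r ∈ maximalIdeal R, r • w = 0) ∧ v - w ∈ E

attribute [instance] Hull.grp Hull.mod Hull.inj

theorem exists_injective : ∃ (Q0 : Type u) (_ : AddCommGroup Q0) (_ : Module R Q0),
    Module.Injective R Q0 ∧ ∃ e0 : Q0, e0 ≠ 0 ∧ ∀ r ∈ maximalIdeal R, r • e0 = 0 := by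
  let k := ModuleCat.of R (R ⧸ maximalIdeal R)
  have hI : CategoryTheory.Injective
      (ModuleCat.of R (CategoryTheory.Injective.under k : ModuleCat.{u} R)) :=
    show CategoryTheory.Injective (CategoryTheory.Injective.under k) from inferInstance
  refine ⟨(CategoryTheory.Injective.under k : ModuleCat.{u} R), inferInstance, inferInstance,
    Module.injective_module_of_injective_object R _, ?_⟩
  have hmono : Function.Injective (CategoryTheory.Injective.ι k).hom :=
    (ModuleCat.mono_iff_injective _).1 inferInstance
  refine ⟨(CategoryTheory.Injective.ι k).hom (Submodule.Quotient.mk 1), ?_, fun r hr => ?_⟩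
  · intro h
    rw [← map_zero (CategoryTheory.Injective.ι k).hom] at h
    have := hmono h
    rw [Submodule.Quotient.mk_eq_zero] at this
    exact (Ideal.ne_top_iff_one _).1 (maximalIdeal.isMaximal R).ne_top this
  · rw [← map_smul, quo_kill hr, map_zero]

theorem exists_hull : Nonempty (Hull R) := by
  obtain ⟨Q0, _, _, hinj, e0, he0, hkill⟩ := exists_injective R
  let s : Set (Submodule R Q0) :=
    {E | ∀ v ∈ E, (∀ r ∈ maximalIdeal R, r • v = 0) → v ∈ Submodule.span R {e0}}
  obtain ⟨E, hE0, hEs, hEmax⟩ := zorn_le_nonempty₀ s (by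
    intro c hc hchain y hy
    refine ⟨sSup c, ?_, fun z hz => le_sSup hz⟩
    intro v hv hv'
    obtain ⟨z, hz, hvz⟩ := (Submodule.mem_sSup_of_directed ⟨y, hy⟩ hchain.directedOn).1 hv
    exact hc hz v hvz hv') (Submodule.span R {e0}) (fun v hv _ => hv)
  refine ⟨⟨Q0, E, e0, hE0 (Submodule.mem_span_singleton_self _), he0, hkill, hEs, ?_⟩⟩
  intro v hv
  by_cases hvE : v ∈ E
  · exact ⟨0, by simp, by simpa using hvE⟩
  have hnot : E ⊔ Submodule.span R {v} ∉ s := fun h =>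
    hvE (hEmax h le_sup_left (Submodule.mem_sup_right (Submodule.mem_span_singleton_self v)))
  simp only [s, Set.mem_ofPred_eq, not_forall] at hnot
  obtain ⟨w, hw, hw', hw2⟩ := hnot
  obtain ⟨e, he, z, hz, rfl⟩ := Submodule.mem_sup.1 hw
  obtain ⟨r, rfl⟩ := Submodule.mem_span_singleton.1 hz
  have hr : IsUnit r := by
    by_contra hr
    exact hw2 (hEs _ (add_mem he (hv r ((mem_maximalIdeal r).2 hr))) hw')
  obtain ⟨t, ht⟩ := hr.exists_left_inv
  refine ⟨t • (e + r • v), fun a ha => by rw [smul_comm, hw' a ha, smul_zero], ?_⟩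
  rw [smul_add, smul_smul, ht, one_smul, sub_add_cancel_right]
  exact neg_mem (E.smul_mem _ he)

variable {R} {A B : Type u} [AddCommGroup A] [Module R A] [AddCommGroup B] [Module R B]

/-- A proper submodule `Y` containing `m ^ N B` misses some element of `B` that represents a socle
element of `B / Y`. -/
theorem exists_socle_step (Y : Submodule R B) {N : ℕ}
    (hN : ∀ r ∈ maximalIdeal R ^ N, ∀ b : B, r • b ∈ Y) (hY : Y ≠ ⊤) :
    ∃ v, v ∉ Y ∧ ∀ r ∈ maximalIdeal R, r • v ∈ Y := by
  induction N with
  | zero =>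
    exact absurd (eq_top_iff.2 fun b _ => by simpa using hN 1 (by simp) b) hY
  | succ N ih =>
    by_cases h : ∀ r ∈ maximalIdeal R ^ N, ∀ b : B, r • b ∈ Y
    · exact ih h
    push Not at h
    obtain ⟨r, hr, b, hb⟩ := h
    refine ⟨r • b, hb, fun s hs => ?_⟩
    rw [smul_smul]
    exact hN _ (by rw [pow_succ']; exact Ideal.mul_mem_mul hs hr) b

/-- `E` behaves as an injective module towards Noetherian modules `B` killed by a power of `m`:
a map to `E` extends along any map to `B` whose kernel it kills. -/
theorem Hull.extend (H : Hull R) [IsNoetherian R B] {N : ℕ}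
    (hN : ∀ r ∈ maximalIdeal R ^ N, ∀ b : B, r • b = 0)
    (a : A →ₗ[R] B) (b : A →ₗ[R] H.Q0) (hb : ∀ x, b x ∈ H.E)
    (h : LinearMap.ker a ≤ LinearMap.ker b) :
    ∃ g : B →ₗ[R] H.Q0, (∀ x, g (a x) = b x) ∧ ∀ x, g x ∈ H.E := by
  let s : Set (Submodule R B) :=
    {Y | ∃ g : B →ₗ[R] H.Q0, (∀ x, g (a x) = b x) ∧ (∀ x, a x ∈ Y) ∧ ∀ x ∈ Y, g x ∈ H.E}
  have hs : s.Nonempty := by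
    obtain ⟨g, hg⟩ := exists_factor a b h
    refine ⟨LinearMap.range a, g, hg, fun x => ⟨x, rfl⟩, ?_⟩
    rintro _ ⟨x, rfl⟩
    rw [hg]; exact hb x
  obtain ⟨Y, ⟨g, hg, haY, hgY⟩, hmax⟩ := set_has_maximal_iff_noetherian.2 ‹_› s hs
  by_cases hY : Y = ⊤
  · exact ⟨g, hg, fun x => hgY x (hY ▸ Submodule.mem_top)⟩
  exfalso
  obtain ⟨v, hv, hmv⟩ := exists_socle_step Y
    (fun r hr b => by rw [hN r hr b]; exact zero_mem _) hY
  obtain ⟨w, hw, hgw⟩ := H.mem_sub (g v) fun r hr => by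
    rw [← map_smul]; exact hgY _ (hmv r hr)
  -- There is a correction `f` with `f Y = 0` and `f v = w`.
  obtain ⟨f, hf⟩ := exists_factor (LinearMap.toSpanSingleton R (B ⧸ Y) (Y.mkQ v))
    (LinearMap.toSpanSingleton R H.Q0 w) (by
      intro r hr
      rw [LinearMap.mem_ker, LinearMap.toSpanSingleton_apply] at hr ⊢
      rw [← map_smul, Submodule.mkQ_apply, Submodule.Quotient.mk_eq_zero] at hr
      refine hw r ?_
      rw [mem_maximalIdeal, mem_nonunits_iff]
      intro hu
      obtain ⟨t, ht⟩ := hu.exists_left_inv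
      have := Y.smul_mem t hr
      rw [smul_smul, ht, one_smul] at this
      exact hv this)
  have hfv : f (Y.mkQ v) = w := by simpa using hf 1
  have hfY : ∀ x ∈ Y, f (Y.mkQ x) = 0 := fun x hx => by
    rw [Submodule.mkQ_apply, (Submodule.Quotient.mk_eq_zero Y).2 hx, map_zero]
  refine hmax (Y ⊔ Submodule.span R {v}) ⟨g - f ∘ₗ Y.mkQ, fun x => ?_, fun x =>
    Submodule.mem_sup_left (haY x), ?_⟩ (lt_of_le_of_ne le_sup_left fun he => hv ?_)
  · rw [LinearMap.sub_apply, LinearMap.comp_apply, hfY _ (haY x), sub_zero, hg]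
  · suffices Y ⊔ Submodule.span R {v} ≤ H.E.comap (g - f ∘ₗ Y.mkQ) from this
    refine sup_le (fun x hx => ?_) ((Submodule.span_singleton_le_iff_mem _ _).2 ?_)
    · rw [Submodule.mem_comap, LinearMap.sub_apply, LinearMap.comp_apply, hfY _ hx, sub_zero]
      exact hgY x hx
    · rw [Submodule.mem_comap, LinearMap.sub_apply, LinearMap.comp_apply, hfv]
      exact hgw
  · rw [he]; exact Submodule.mem_sup_right (Submodule.mem_span_singleton_self v)

/-- The Matlis dual of `T`: the maps `T → Q0` with image in `E`. -/
def Hull.W (H : Hull R) (T : Type u) [AddCommGroup T] [Module R T] :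
    Submodule R (T →ₗ[R] H.Q0) where
  carrier := {f | ∀ t, f t ∈ H.E}
  add_mem' := fun hf hg t => add_mem (hf t) (hg t)
  zero_mem' := fun _ => zero_mem _
  smul_mem' := fun r _ hf t => H.E.smul_mem r (hf t)

variable {T : Type u} [AddCommGroup T] [Module R T]

theorem Hull.mem_W {H : Hull R} {f : T →ₗ[R] H.Q0} : f ∈ H.W T ↔ ∀ t, f t ∈ H.E := Iff.rfl

/-- The Matlis dual separates the points of a finite length module. -/
theorem Hull.separates (H : Hull R) [IsNoetherian R T] {N : ℕ}
    (hN : ∀ r ∈ maximalIdeal R ^ N, ∀ b : T, r • b = 0) {t : T} (h : ∀ f ∈ H.W T, f t = 0) :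
    t = 0 := by
  by_contra ht
  -- a socle element `s • t`
  obtain ⟨v, hv, hmv⟩ := exists_socle_step (B := Submodule.span R {t}) ⊥ (N := N)
    (fun r hr b => by
      rw [Submodule.mem_bot]; exact Subtype.ext (hN r hr _)) (by
        intro hbt
        have h1 : (⟨t, Submodule.mem_span_singleton_self t⟩ : Submodule.span R {t}) ∈
          (⊤ : Submodule R (Submodule.span R {t})) := trivial
        rw [← hbt, Submodule.mem_bot] at h1
        exact ht (congrArg Subtype.val h1))
  obtain ⟨s, hs⟩ := Submodule.mem_span_singleton.1 v.2
  rw [Submodule.mem_bot] at hv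
  have hv0 : s • t ≠ 0 := fun h0 => hv (Subtype.ext (by rw [← hs, h0]; rfl))
  have hmv' : ∀ r ∈ maximalIdeal R, r • s • t = 0 := fun r hr => by
    have := hmv r hr
    rw [Submodule.mem_bot] at this
    rw [hs]; exact congrArg Subtype.val this
  obtain ⟨f, hf, hfE⟩ := H.extend hN (LinearMap.toSpanSingleton R T (s • t))
    (LinearMap.toSpanSingleton R H.Q0 H.e0) (fun r => H.E.smul_mem r H.e0_mem) (by
      intro r hr
      rw [LinearMap.mem_ker, LinearMap.toSpanSingleton_apply] at hr ⊢
      refine H.e0_kill r ?_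
      rw [mem_maximalIdeal, mem_nonunits_iff]
      intro hu
      exact hv0 (hu.smul_eq_zero.1 hr))
  have h1 : f (s • t) = H.e0 := by simpa using hf 1
  rw [map_smul, h f hfE, smul_zero] at h1
  exact H.e0_ne h1.symm

/-- An element of the dual vanishing on the socle lies in `m` times the dual. -/
theorem Hull.mem_smul_of_socle [IsNoetherianRing R] (H : Hull R) [IsNoetherian R T] {N : ℕ}
    (hN : ∀ r ∈ maximalIdeal R ^ N, ∀ b : T, r • b = 0) {f : T →ₗ[R] H.Q0} (hf : f ∈ H.W T)
    (h : ∀ t, (∀ r ∈ maximalIdeal R, r • t = 0) → f t = 0) :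
    f ∈ maximalIdeal R • H.W T := by
  obtain ⟨r, x, hx⟩ := Submodule.fg_iff_exists_fin_generating_family.1
    (IsNoetherian.noetherian (maximalIdeal R))
  obtain ⟨g, hg, hgE⟩ := H.extend (B := Fin r → T) (fun a ha b => funext fun i => hN a ha (b i))
    (LinearMap.pi fun i => x i • LinearMap.id) f hf (by
      intro t ht
      rw [LinearMap.mem_ker] at ht ⊢
      refine h t fun a ha => ?_
      rw [← hx] at ha
      have hle : Submodule.span R (Set.range x) ≤
          LinearMap.ker (LinearMap.toSpanSingleton R T t) := by
        rw [Submodule.span_le]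
        rintro _ ⟨i, rfl⟩
        simpa using congrFun ht i
      simpa using hle ha)
  have : f = ∑ i, x i • (g ∘ₗ LinearMap.single R (fun _ => T) i) := by
    ext t
    have h1 : (LinearMap.pi fun i => x i • LinearMap.id : T →ₗ[R] Fin r → T) t =
        ∑ i, LinearMap.single R (fun _ => T) i (x i • t) :=
      (Finset.univ_sum_single _).symm
    rw [← hg, h1, map_sum, LinearMap.sum_apply]
    simp only [map_smul, LinearMap.smul_apply, LinearMap.comp_apply]
  rw [this]
  refine Submodule.sum_mem _ fun i _ => Submodule.smul_mem_smul ?_ fun t => hgE _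
  rw [← hx]; exact Submodule.subset_span ⟨i, rfl⟩

/-- The dual of a finite-dimensional vector space over the residue field is finitely generated. -/
theorem Hull.W_finite [IsNoetherianRing R] (H : Hull R) [IsNoetherian R T]
    (hT : ∀ r ∈ maximalIdeal R, ∀ b : T, r • b = 0) : (H.W T).FG := by
  obtain ⟨r, x, hx⟩ := Submodule.fg_iff_exists_fin_generating_family.1
    (IsNoetherian.noetherian (⊤ : Submodule R T))
  let L : H.W T →ₗ[R] Fin r → Submodule.span R {H.e0} := LinearMap.pi fun i =>
    { toFun := fun f => ⟨f.1 (x i), H.socle _ (f.2 _) fun a ha => by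
        rw [← map_smul, hT a ha, map_zero]⟩
      map_add' := fun f g => rfl
      map_smul' := fun a f => rfl }
  have hL : Function.Injective L := by
    intro f g hfg
    refine Subtype.ext (LinearMap.ext_on_range hx fun i => ?_)
    exact congrArg Subtype.val (congrFun hfg i)
  have : IsNoetherian R (H.W T) := isNoetherian_of_injective L hL
  exact (Submodule.fg_top _).1 (IsNoetherian.noetherian _)

/-- Nakayama's lemma for a nilpotent action. -/
theorem le_of_le_add_smul {X : Type v} [AddCommGroup X] [Module R X] {W F : Submodule R X}
    (I : Ideal R) (h : W ≤ F ⊔ I • W) {N : ℕ} (hN : ∀ r ∈ I ^ N, ∀ w ∈ W, r • w = 0) : W ≤ F := by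
  have key : ∀ j, W ≤ F ⊔ I ^ j • W := by
    intro j
    induction j with
    | zero => simp
    | succ j ih =>
      calc W ≤ F ⊔ I • W := h
        _ ≤ F ⊔ I • (F ⊔ I ^ j • W) := sup_le_sup le_rfl (Submodule.smul_mono le_rfl ih)
        _ ≤ F ⊔ I ^ (j + 1) • W := by
          rw [Submodule.smul_sup, ← Submodule.mul_smul, ← pow_succ']
          exact sup_le le_sup_left (sup_le (Submodule.smul_le_right.trans le_sup_left)
            le_sup_right)
  have h0 : I ^ N • W = ⊥ := by
    rw [eq_bot_iff, Submodule.smul_le]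
    intro r hr w hw
    rw [hN r hr w hw]; exact zero_mem _
  simpa [h0] using key N

/-- The determinant trick: if `c W ⊆ y W` and `W` has `g` generators, some `c' ≡ c ^ g` modulo
`y` annihilates `W`. -/
theorem det_trick {X : Type v} [AddCommGroup X] [Module R X] {g : ℕ} (f : Fin g → X) (c y : R)
    (h : ∀ i, ∃ w ∈ Submodule.span R (Set.range f), c • f i = y • w) :
    ∃ c', (∀ i, c' • f i = 0) ∧ c' - c ^ g ∈ Ideal.span {y} := by
  choose w hw hcw using h
  have hA : ∀ i, ∃ a : Fin g → R, ∑ j, a j • f j = w i := fun i =>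
    (Submodule.mem_span_range_iff_exists_fun R).1 (hw i)
  choose A hA using hA
  let B : Matrix (Fin g) (Fin g) R := c • (1 : Matrix (Fin g) (Fin g) R) - y • Matrix.of A
  have hB : ∀ i, ∑ j, B i j • f j = 0 := by
    intro i
    have h1 : ∑ j, (c • (1 : Matrix (Fin g) (Fin g) R)) i j • f j = c • f i := by
      simp [Matrix.one_apply, ite_smul]
    have h2 : ∑ j, (y • Matrix.of A) i j • f j = y • w i := by
      simp only [Matrix.smul_apply, Matrix.of_apply, smul_eq_mul, mul_smul]
      rw [← Finset.smul_sum, hA]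
    simp only [B, Matrix.sub_apply, sub_smul, Finset.sum_sub_distrib]
    rw [h1, h2, hcw, sub_self]
  refine ⟨B.det, fun k => ?_, ?_⟩
  · have h1 : ∑ i, B.adjugate k i • ∑ j, B i j • f j = B.det • f k := by
      simp only [Finset.smul_sum, smul_smul]
      rw [Finset.sum_comm]
      simp only [← Finset.sum_smul, ← Matrix.mul_apply, Matrix.adjugate_mul, Matrix.smul_apply,
        Matrix.one_apply, smul_eq_mul, mul_ite, mul_one, mul_zero, ite_smul, zero_smul]
      simp
    rw [← h1]
    simp [hB]
  · rw [← Ideal.Quotient.eq, RingHom.map_det]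
    have : (Ideal.Quotient.mk (Ideal.span {y})).mapMatrix B =
        Ideal.Quotient.mk (Ideal.span {y}) c • 1 := by
      ext i j
      have hy : Ideal.Quotient.mk (Ideal.span {y}) y = 0 :=
        Ideal.Quotient.eq_zero_iff_mem.2 (Ideal.mem_span_singleton_self y)
      simp only [RingHom.mapMatrix_apply, Matrix.map_apply, B, Matrix.sub_apply,
        Matrix.smul_apply, smul_eq_mul, map_sub, map_mul, hy, zero_mul, sub_zero,
        Matrix.one_apply]
      split_ifs <;> simp
    rw [this, Matrix.det_smul]
    simp

theorem socle_noetherian {V : Type v} [AddCommGroup V] [Module R V] [IsArtinian R V]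
    (hV : ∀ r ∈ maximalIdeal R, ∀ b : V, r • b = 0) : IsNoetherian R V := by
  have ht : Module.IsTorsionBySet R V (maximalIdeal R : Set R) := fun x a => hV a a.2 x
  let _ := ht.module
  let e : V →ₛₗ[Ideal.Quotient.mk (maximalIdeal R)] V :=
    { toFun := id
      map_add' := fun _ _ => rfl
      map_smul' := fun _ _ => rfl }
  rw [e.isNoetherian_iff_of_bijective Function.bijective_id]
  let _ := Ideal.Quotient.field (maximalIdeal R)
  rw [IsSemiprimaryRing.isNoetherian_iff_isArtinian,
    ← e.isArtinian_iff_of_bijective Function.bijective_id]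
  infer_instance

/-- Elements of Artinian modules are killed by a power of the maximal ideal. -/
theorem artinian_torsion [IsNoetherianRing R] {V : Type v} [AddCommGroup V] [Module R V]
    [IsArtinian R V] (t : V) : ∃ N, ∀ r ∈ maximalIdeal R ^ N, r • t = 0 := by
  obtain ⟨N, hN⟩ := monotone_stabilizes_iff_artinian.2 (inferInstance : IsArtinian R V)
    ⟨fun n => OrderDual.toDual (maximalIdeal R ^ n • Submodule.span R {t}),
      fun a b hab => Submodule.smul_mono (Ideal.pow_le_pow_right hab) le_rfl⟩
  refine ⟨N, fun r hr => ?_⟩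
  have h1 : maximalIdeal R ^ N • Submodule.span R {t} =
    maximalIdeal R ^ (N + 1) • Submodule.span R {t} := hN (N + 1) (Nat.le_succ N)
  have hfg : (maximalIdeal R ^ N • Submodule.span R {t}).FG :=
    Submodule.FG.smul (IsNoetherian.noetherian _) (Submodule.fg_span_singleton t)
  have h2 := Submodule.eq_bot_of_le_smul_of_le_jacobson_bot (maximalIdeal R) _ hfg
    (by rw [← Submodule.mul_smul, ← pow_succ', ← h1]) (maximalIdeal_le_jacobson _)
  have := Submodule.smul_mem_smul hr (Submodule.mem_span_singleton_self t)
  rwa [h2, Submodule.mem_bot] at this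

/-- If `c` kills the `y`-torsion of an Artinian module `V`, then for a fixed `g` every element
of `V` is killed by some element congruent to `c ^ g` modulo `y`.  Here `g` bounds the number of
generators of the Matlis dual of every cyclic submodule `T` of `V`: by Nakayama it is generated by
extensions of the generators of the dual of the socle of `V`.  By hypothesis `c` maps this dual
into its multiple by `y`, so that the determinant trick applies. -/
theorem exists_exponent [IsNoetherianRing R] {V : Type u} [AddCommGroup V] [Module R V]
    [IsArtinian R V] {c y : R} (hc : ∀ v : V, y • v = 0 → c • v = 0) :
    ∃ g : ℕ, ∀ t : V, ∃ c', c' • t = 0 ∧ c' - c ^ g ∈ Ideal.span {y} := by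
  obtain ⟨H⟩ := exists_hull R
  let K : Submodule R V := Submodule.torsionBySet R V (maximalIdeal R : Set R)
  have hK : ∀ r ∈ maximalIdeal R, ∀ b : K, r • b = 0 := fun r hr b =>
    Subtype.ext ((Submodule.mem_torsionBySet_iff _ _).1 b.2 ⟨r, hr⟩)
  have hKn : IsNoetherian R K := socle_noetherian hK
  obtain ⟨g, φ, hφ⟩ := Submodule.fg_iff_exists_fin_generating_family.1 (H.W_finite hK)
  refine ⟨g, fun t => ?_⟩
  let T := Submodule.span R {t}
  obtain ⟨N, hN⟩ := artinian_torsion (R := R) t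
  have hNT : ∀ r ∈ maximalIdeal R ^ N, ∀ b : T, r • b = 0 := by
    intro r hr b
    obtain ⟨s, hs⟩ := Submodule.mem_span_singleton.1 b.2
    refine Subtype.ext ?_
    rw [Submodule.coe_smul, ← hs, smul_comm, hN r hr, smul_zero]; rfl
  have hTn : IsNoetherian R T := isNoetherian_of_fg_of_noetherian _ (Submodule.fg_span_singleton t)
  -- `S` is the socle of `T`, and `j` embeds it in the socle `K` of `V`.
  let S : Submodule R T := Submodule.torsionBySet R T (maximalIdeal R : Set R)
  have hS : ∀ {s : T}, s ∈ S ↔ ∀ r ∈ maximalIdeal R, r • s = 0 := fun {s} =>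
    (Submodule.mem_torsionBySet_iff _ _).trans ⟨fun h r hr => h ⟨r, hr⟩, fun h r => h r r.2⟩
  let j : S →ₗ[R] K := (T.subtype ∘ₗ S.subtype).codRestrict K fun s => by
    rw [Submodule.mem_torsionBySet_iff]
    intro a
    exact congrArg Subtype.val (hS.1 s.2 a a.2)
  have hj : Function.Injective j := fun a b hab => by
    have : ((a : T) : V) = ((b : T) : V) := congrArg (fun z : K => (z : V)) hab
    exact Subtype.ext (Subtype.ext this)
  have hφW : ∀ i, φ i ∈ H.W K := fun i => hφ ▸ Submodule.subset_span ⟨i, rfl⟩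
  have hf : ∀ i, ∃ f ∈ H.W T, ∀ s : S, f s = φ i (j s) := fun i => by
    obtain ⟨f, hf, hfE⟩ := H.extend hNT S.subtype (φ i ∘ₗ j) (fun s => hφW i _) (by simp)
    exact ⟨f, hfE, hf⟩
  choose f hfW hfS using hf
  have hspan : H.W T ≤ Submodule.span R (Set.range f) := by
    refine le_of_le_add_smul (maximalIdeal R) (fun h hh => ?_) (N := N) ?_
    · obtain ⟨ψ, hψ, hψE⟩ := H.extend (N := 1) (fun r hr b => hK r (by simpa using hr) b) j
        (h ∘ₗ S.subtype) (fun s => hh _) (by rw [LinearMap.ker_eq_bot.2 hj]; exact bot_le)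
      have hψW : ψ ∈ Submodule.span R (Set.range φ) := hφ ▸ hψE
      obtain ⟨a, ha⟩ := (Submodule.mem_span_range_iff_exists_fun R).1 hψW
      have hF : ∑ i, a i • f i ∈ Submodule.span R (Set.range f) :=
        Submodule.sum_mem _ fun i _ => Submodule.smul_mem _ _ (Submodule.subset_span ⟨i, rfl⟩)
      have hFW : ∑ i, a i • f i ∈ H.W T :=
        Submodule.sum_mem _ fun i _ => Submodule.smul_mem _ _ (hfW i)
      rw [← add_sub_cancel (∑ i, a i • f i) h]
      refine Submodule.add_mem_sup hF (H.mem_smul_of_socle hNT (sub_mem hh hFW) fun s hs => ?_)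
      have h1 := hψ ⟨s, hS.2 hs⟩
      rw [← ha] at h1
      simp only [LinearMap.sum_apply, LinearMap.smul_apply, LinearMap.comp_apply,
        Submodule.subtype_apply] at h1
      rw [LinearMap.sub_apply, LinearMap.sum_apply, ← h1, sub_eq_zero]
      refine Finset.sum_congr rfl fun i _ => ?_
      rw [LinearMap.smul_apply, ← hfS i]
    · intro r hr w hw
      ext s
      rw [LinearMap.smul_apply, ← map_smul, hNT r hr, map_zero, LinearMap.zero_apply]
  obtain ⟨c', hc', hcg⟩ := det_trick f c y fun i => by
    obtain ⟨w, hw, hwE⟩ := H.extend hNT (y • LinearMap.id) (c • f i)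
      (fun s => H.E.smul_mem _ (hfW i s)) (by
        intro s hs
        rw [LinearMap.mem_ker] at hs ⊢
        have : c • s = 0 := Subtype.ext (hc s (congrArg Subtype.val hs))
        rw [LinearMap.smul_apply, ← map_smul, this, map_zero])
    refine ⟨w, hspan hwE, ?_⟩
    ext s
    rw [← hw]
    simp
  refine ⟨c', ?_, hcg⟩
  have : c' • (⟨t, Submodule.mem_span_singleton_self t⟩ : T) = 0 := by
    refine H.separates hNT fun h hh => ?_
    obtain ⟨a, rfl⟩ := (Submodule.mem_span_range_iff_exists_fun R).1 (hspan hh)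
    rw [map_smul, LinearMap.sum_apply, Finset.smul_sum]
    refine Finset.sum_eq_zero fun i _ => ?_
    rw [LinearMap.smul_apply, smul_comm, ← LinearMap.smul_apply c', hc', LinearMap.zero_apply,
      smul_zero]
  exact congrArg Subtype.val this

end Hull

/-! ### Linear compactness and the Hartshorne–Lichtenbaum theorem -/

section HL

variable {R : Type u} [CommRing R] [IsNoetherianRing R] [IsLocalRing R]

theorem isArtinian_quo_pow (s : ℕ) : IsArtinian R (R ⧸ maximalIdeal R ^ s) := by
  refine devissage (maximalIdeal R ^ s) (fun N _ _ => IsArtinian R N)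
    (fun N _ _ h => inferInstance) ?_ ?_ _ (fun r hr u => quo_kill hr u)
  · intro p hp hle
    have hpm : p = maximalIdeal R :=
      le_antisymm (le_maximalIdeal hp.ne_top) (Ideal.IsPrime.le_of_pow_le hle)
    subst hpm
    have : IsSimpleModule R (R ⧸ maximalIdeal R) :=
      isSimpleModule_iff_isCoatom.2 (Ideal.isMaximal_def.1 (maximalIdeal.isMaximal R))
    infer_instance
  · intro N₁ N₂ N₃ _ _ _ _ _ _ f g hf hg hfg h1 h3
    exact isArtinian_of_range_eq_ker _ _ (LinearMap.exact_iff.1 hfg).symm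

/-- Ideals of a Noetherian local ring are closed in the adic topology. -/
theorem mem_of_forall_mem_sup_pow (I : Ideal R) {x : R}
    (h : ∀ s, x ∈ I ⊔ maximalIdeal R ^ s) : x ∈ I := by
  have h1 := Ideal.iInf_pow_smul_eq_bot_of_isLocalRing (R := R) (M := R ⧸ I) (maximalIdeal R)
    (maximalIdeal.isMaximal R).ne_top
  rw [← Submodule.Quotient.mk_eq_zero I, ← Submodule.mem_bot R, ← h1, Submodule.mem_iInf]
  intro s
  obtain ⟨i, hi, m, hm, rfl⟩ := Submodule.mem_sup.1 (h s)
  rw [Submodule.Quotient.mk_add, (Submodule.Quotient.mk_eq_zero I).2 hi, zero_add,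
    show m = m • (1 : R) by simp, Submodule.Quotient.mk_smul]
  exact Submodule.smul_mem_smul hm trivial

/-- Linear compactness of a complete local ring, for the equations `a ≡ y r` modulo `Λ n`.  The
solution is the limit of a Cauchy sequence of approximate solutions, which exists because the
images of the solution sets in the Artinian quotients by powers of `m` stabilize. -/
theorem exists_common_solution [IsAdicComplete (maximalIdeal R) R] (Λ : ℕ → Ideal R)
    (hΛ : Antitone Λ) {a y : R} (h : ∀ n, ∃ r, a - y * r ∈ Λ n) : ∃ r, ∀ n, a - y * r ∈ Λ n := by
  let Γ : ℕ → Ideal R := fun n => Submodule.comap (LinearMap.lsmul R R y) (Λ n)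
  have hΓ : Antitone Γ := fun i j hij => Submodule.comap_mono (hΛ hij)
  have hst : ∀ s, ∃ n0, ∀ n, n0 ≤ n → Γ n0 ≤ Γ n ⊔ maximalIdeal R ^ s := by
    intro s
    obtain ⟨n0, hn0⟩ := monotone_stabilizes_iff_artinian.2 (isArtinian_quo_pow (R := R) s)
      ⟨fun n => OrderDual.toDual (Submodule.map (Submodule.mkQ (maximalIdeal R ^ s)) (Γ n)),
        fun i j hij => Submodule.map_mono (hΓ hij)⟩
    refine ⟨n0, fun n hn => ?_⟩
    have h1 : Submodule.map (Submodule.mkQ (maximalIdeal R ^ s)) (Γ n0) =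
      Submodule.map (Submodule.mkQ (maximalIdeal R ^ s)) (Γ n) := hn0 n hn
    have h2 := (Submodule.map_le_iff_le_comap).1 h1.le
    rwa [Submodule.comap_map_mkQ, sup_comm] at h2
  choose φ hφ using hst
  let ψ : ℕ → ℕ := fun s => s + ∑ i ∈ Finset.range (s + 1), φ i
  have hψs : ∀ s, s ≤ ψ s := fun s => Nat.le_add_right _ _
  have hψφ : ∀ s, φ s ≤ ψ s := fun s =>
    (Finset.single_le_sum (f := φ) (fun _ _ => Nat.zero_le _)
      (Finset.mem_range.2 (Nat.lt_succ_self s))).trans (Nat.le_add_left _ _)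
  have hψm : ∀ s, ψ s ≤ ψ (s + 1) := fun s => by
    simp only [ψ]; rw [Finset.sum_range_succ _ (s + 1)]; omega
  have hstep : ∀ s (ρ : {r // a - y * r ∈ Λ (ψ s)}), ∃ ρ' : {r // a - y * r ∈ Λ (ψ (s + 1))},
      ρ'.1 - ρ.1 ∈ maximalIdeal R ^ s := by
    rintro s ⟨ρ, hρ⟩
    obtain ⟨σ, hσ⟩ := h (ψ (s + 1))
    have h1 : σ - ρ ∈ Γ (ψ s) := by
      change y * (σ - ρ) ∈ Λ (ψ s)
      have := sub_mem hρ (hΛ (hψm s) hσ)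
      convert this using 1; ring
    have h2 := hφ s (ψ (s + 1)) ((hψφ s).trans (hψm s)) (hΓ (hψφ s) h1)
    obtain ⟨γ, hγ, μ, hμ, hγμ⟩ := Submodule.mem_sup.1 h2
    have hγ' : y * γ ∈ Λ (ψ (s + 1)) := hγ
    refine ⟨⟨σ - γ, ?_⟩, ?_⟩
    · convert add_mem hσ hγ' using 1; ring
    · convert hμ using 1
      simp only
      rw [sub_right_comm, ← hγμ]; ring
  choose F hF using hstep
  obtain ⟨ρ0, hρ0⟩ := h (ψ 0)
  let ρ : ∀ s, {r // a - y * r ∈ Λ (ψ s)} := fun s =>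
    Nat.rec (motive := fun s => {r // a - y * r ∈ Λ (ψ s)}) ⟨ρ0, hρ0⟩ (fun s r => F s r) s
  have hρ : ∀ s, (ρ (s + 1)).1 - (ρ s).1 ∈ maximalIdeal R ^ s := fun s => hF s (ρ s)
  have hρ' : ∀ s t, s ≤ t → (ρ t).1 - (ρ s).1 ∈ maximalIdeal R ^ s := by
    intro s t hst
    induction t, hst using Nat.le_induction with
    | base => simp
    | succ t hst ih =>
      rw [← sub_add_sub_cancel _ (ρ t).1]
      exact add_mem (Ideal.pow_le_pow_right hst (hρ t)) ih
  obtain ⟨L, hL⟩ := IsPrecomplete.prec (I := maximalIdeal R) (M := R) inferInstance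
    (f := fun s => (ρ s).1) (fun {s t} hst => by
      rw [SModEq.sub_mem, ← neg_mem_iff, neg_sub]
      simpa using hρ' s t hst)
  refine ⟨L, fun n => mem_of_forall_mem_sup_pow _ fun s => ?_⟩
  have h1 : (ρ (n + s)).1 - L ∈ maximalIdeal R ^ (n + s) := by
    have := SModEq.sub_mem.1 (hL (n + s))
    simpa using this
  rw [show a - y * L = (a - y * (ρ (n + s)).1) + y * ((ρ (n + s)).1 - L) by ring]
  exact Submodule.add_mem_sup
    (hΛ ((Nat.le_add_right n s).trans (hψs _)) (ρ (n + s)).2)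
    (Ideal.mul_mem_left _ _ (Ideal.pow_le_pow_right (Nat.le_add_left _ _) h1))

/-- If the top local cohomology of `R/p` vanishes for all primes `p` between `I` and `P`, then some
element outside `P` kills that of `R/I`. -/
theorem exists_kill (P : Ideal R) [hP : P.IsPrime] (l : List R) (I : Ideal R)
    (h : ∀ p : Ideal R, p.IsPrime → I ≤ p → Subsingleton (Top (R ⧸ p) l) ∨ ¬ p ≤ P) :
    ∃ c, c ∉ P ∧ ∀ w : Top (R ⧸ I) l, c • w = 0 := by
  refine devissage I (fun N _ _ => ∃ c, c ∉ P ∧ ∀ w : Top N l, c • w = 0) ?_ ?_ ?_ (R ⧸ I)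
    (fun r hr u => quo_kill hr u)
  · intro N _ _ hN
    have := Top_subsingleton (M := N) l
    exact ⟨1, fun h1 => hP.ne_top ((Ideal.eq_top_iff_one _).2 h1),
      fun w => Subsingleton.elim _ _⟩
  · intro p hp hle
    rcases h p hp hle with h1 | h1
    · exact ⟨1, fun h1 => hP.ne_top ((Ideal.eq_top_iff_one _).2 h1),
        fun w => Subsingleton.elim _ _⟩
    · obtain ⟨c, hc, hcP⟩ := SetLike.not_le_iff_exists.1 h1
      exact ⟨c, hcP, Top_kill (quo_kill hc) l⟩
  · rintro N₁ N₂ N₃ _ _ _ _ _ _ f g hf hg hfg ⟨c, hc, hc1⟩ ⟨c', hc', hc2⟩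
    refine ⟨c * c', fun hcc => (hP.mem_or_mem hcc).elim hc hc', fun w => ?_⟩
    have h1 : Top.map g l (c' • w) = 0 := by rw [map_smul, hc2]
    obtain ⟨v, hv⟩ := (Top.map_exact hfg hg l _).1 h1
    rw [mul_smul, ← hv, ← map_smul, hc1, map_zero]

/-- The Hartshorne–Lichtenbaum vanishing theorem for `R/q`, `R` a complete local ring: the top local
cohomology vanishes unless `l` is a system of parameters of `R/q`.

The proof is by induction on `l`.  If `(y, l) + q` lies in a non-maximal prime `P`, the induction
hypothesis gives `c ∉ P` killing the top local cohomology of `R/(q + yR)`, hence the `y`-torsion of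
that of `R/q`.  By `exists_exponent` and linear compactness some `c ^ g - y r`, again outside `P`,
kills everything.  On the other hand this element is nonzero in `R/q`, so `R/(q, c ^ g - y r)` has
smaller dimension and vanishing top local cohomology; by right exactness the element acts
surjectively on the top local cohomology of `R/q`, which is therefore zero. -/
theorem hartshorne_lichtenbaum [IsAdicComplete (maximalIdeal R) R] (l : List R) :
    ∀ (q : Ideal R), q.IsPrime → ringKrullDim (R ⧸ q) ≤ (l.length : WithBot ℕ∞) →
    ¬ (ringKrullDim (R ⧸ q) = (l.length : WithBot ℕ∞) ∧
      (pI l 1 ⊔ q).radical = maximalIdeal R) → Subsingleton (Top (R ⧸ q) l) := by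
  induction l with
  | nil =>
    intro q hq hd hbad
    exfalso
    have hm : q.IsMaximal := isMaximal_of_dim_le_zero (by simpa using hd)
    refine hbad ⟨le_antisymm hd (by simpa using dim_nonneg q), ?_⟩
    rw [pI_nil, bot_sup_eq, hq.radical, eq_maximalIdeal hm]
  | cons y l ih =>
    intro q hq hd hbad
    rcases hd.lt_or_eq with hlt | heq
    · exact Top_vanish _ q _ (fun r hr u => quo_kill hr u)
        fun p hp hle => (dim_mono hle).trans_lt hlt
    by_cases hyq : y ∈ q
    · exact Top_subsingleton_of_kill_cons (quo_kill hyq) l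
    by_cases hunit : ∃ z ∈ y :: l, IsUnit z
    · obtain ⟨z, hz, hzu⟩ := hunit
      exact Top_subsingleton_of_unit hz hzu
    push Not at hunit
    have hJm : pI (y :: l) 1 ⊔ q ≤ maximalIdeal R := by
      refine sup_le (Ideal.span_le.2 ?_) (le_maximalIdeal hq.ne_top)
      rintro _ ⟨z, hz, rfl⟩
      simpa using hunit z hz
    obtain ⟨P, hP, hJP, hPm⟩ : ∃ P : Ideal R, P.IsPrime ∧ pI (y :: l) 1 ⊔ q ≤ P ∧
        ¬ maximalIdeal R ≤ P := by
      by_contra hcon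
      push Not at hcon
      refine hbad ⟨heq, le_antisymm ((maximalIdeal.isMaximal R).isPrime.radical_le_iff.2 hJm) ?_⟩
      rw [Ideal.radical_eq_sInf]
      exact le_sInf fun P ⟨hJP, hP⟩ => hcon P hP hJP
    have hyP : y ∈ P := hJP (Ideal.mem_sup_left (by simpa using pow_mem_pI (List.mem_cons_self) 1))
    have hlP : pI l 1 ≤ P := by
      refine le_trans ?_ hJP
      rw [pI_cons]
      exact le_sup_right.trans le_sup_left
    obtain ⟨c, hcP, hc⟩ := exists_kill P l (q ⊔ Ideal.span {y}) (by
      intro p hp hle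
      by_cases hb : ringKrullDim (R ⧸ p) = (l.length : WithBot ℕ∞) ∧
        (pI l 1 ⊔ p).radical = maximalIdeal R
      · right
        intro hpP
        refine hPm ?_
        rw [← hb.2, hP.radical_le_iff]
        exact sup_le hlP hpP
      · exact Or.inl (ih p hp (dim_le_of_lt (lt_sup_span hyq hle) hd) hb))
    obtain ⟨θ, hθ⟩ := exists_theta (quoMap q y) (quoMap_surj q y) (quoMap_exact q y) l
    have hart : IsArtinian R (Top (R ⧸ q) (y :: l)) :=
      Top_artinian _ q _ (fun r hr u => quo_kill hr u) fun p hp hle => (dim_mono hle).trans hd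
    obtain ⟨g, hg⟩ := exists_exponent (V := Top (R ⧸ q) (y :: l)) (c := c) (y := y) (by
      intro v hv
      obtain ⟨w, rfl⟩ := hθ v hv
      rw [← map_smul, hc, map_zero])
    -- `Λ n` is the annihilator of `1 / (y x₂ ⋯ x_r) ^ n`; the intersection of the `Λ n`
    -- annihilates the top local cohomology.
    let e : R ⧸ q := Submodule.Quotient.mk 1
    let Λ : ℕ → Ideal R := fun n =>
      LinearMap.ker (LinearMap.toSpanSingleton R _ (hh (y :: l) n e))
    have hΛ : Antitone Λ := by
      refine antitone_nat_of_succ_le fun n r hr => ?_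
      simp only [Λ, LinearMap.mem_ker, LinearMap.toSpanSingleton_apply] at hr ⊢
      rw [← hh_prod _ n 1, smul_comm, hr, smul_zero]
    obtain ⟨r, hr⟩ := exists_common_solution Λ hΛ (a := c ^ g) (y := y) (by
      intro n
      obtain ⟨c', hc', hcg⟩ := hg (hh (y :: l) n e)
      obtain ⟨s, hs⟩ := Ideal.mem_span_singleton'.1 hcg
      refine ⟨-s, ?_⟩
      rw [show c ^ g - y * -s = c' by linear_combination hs]
      exact hc')
    set l0 := c ^ g - y * r with hl0
    have hl0P : l0 ∉ P := by
      intro h0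
      refine hcP (hP.mem_of_pow_mem g ?_)
      rw [show c ^ g = l0 + y * r by rw [hl0]; ring]
      exact add_mem h0 (Ideal.mul_mem_right _ _ hyP)
    have hl0q : l0 ∉ q := fun h0 => hl0P (hJP (Ideal.mem_sup_right h0))
    have hkill : ∀ w : Top (R ⧸ q) (y :: l), l0 • w = 0 := by
      intro w
      obtain ⟨n, u, rfl⟩ := hh_surj _ w
      obtain ⟨b, rfl⟩ := Submodule.Quotient.mk_surjective _ u
      have h1 : (Submodule.Quotient.mk b : R ⧸ q) = b • e := by
        rw [← Submodule.Quotient.mk_smul, smul_eq_mul, mul_one]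
      have h2 : l0 • hh (y :: l) n e = 0 := hr n
      rw [h1, map_smul, smul_comm, h2, smul_zero]
    have hvan : Subsingleton (Top (R ⧸ (q ⊔ Ideal.span {l0})) (y :: l)) := by
      refine Top_vanish _ _ _ (fun r hr u => quo_kill hr u) fun p hp hle => ?_
      refine (dim_le_of_lt (lt_sup_span hl0q hle) hd).trans_lt ?_
      rw [List.length_cons]
      exact_mod_cast Nat.lt_succ_self _
    refine subsingleton_of_forall_eq 0 fun w => ?_
    obtain ⟨v, rfl⟩ := (Top.map_exact (quoMap_exact q l0) (quoMap_surj q l0) (y :: l) w).1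
      (Subsingleton.elim _ _)
    rw [Top.map_smul_id, LinearMap.smul_apply, LinearMap.id_apply, hkill]

end HL

/-! ### Homology of differential modules -/

section Differential

variable {R : Type u} [CommRing R] {K K' K'' : Type v} [AddCommGroup K] [Module R K]
  [AddCommGroup K'] [Module R K'] [AddCommGroup K''] [Module R K'']

/-- The homology `ker D / im D` of an endomorphism `D` (meant for `D ∘ D = 0`). -/
abbrev HD (D : K →ₗ[R] K) : Type v :=
  LinearMap.ker D ⧸ (LinearMap.range D).comap (LinearMap.ker D).subtype

theorem HD_mk_eq_zero {D : K →ₗ[R] K} {z : LinearMap.ker D} :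
    (Submodule.Quotient.mk z : HD D) = 0 ↔ ∃ e, D e = z := by
  rw [Submodule.Quotient.mk_eq_zero, Submodule.mem_comap]
  rfl

/-- The map induced on homology by a morphism of differential modules. -/
noncomputable def HD.map {D : K →ₗ[R] K} {D' : K' →ₗ[R] K'} (f : K →ₗ[R] K')
    (hf : ∀ z, f (D z) = D' (f z)) : HD D →ₗ[R] HD D' :=
  Submodule.mapQ _ _ (f.restrict (p := LinearMap.ker D) (q := LinearMap.ker D') (by
      intro z hz
      rw [LinearMap.mem_ker] at hz ⊢
      rw [← hf, hz, map_zero])) (by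
    rintro ⟨z, hz⟩ ⟨e, he⟩
    exact ⟨f e, by rw [← hf, he]; rfl⟩)

/-- Homology of differential modules is exact in the middle; in particular the class of
differential modules with Artinian homology is closed under extensions. -/
theorem HD_artinian_of_exact {D : K →ₗ[R] K} {D' : K' →ₗ[R] K'} {D'' : K'' →ₗ[R] K''}
    (hD' : ∀ z, D' (D' z) = 0)
    {f : K →ₗ[R] K'} {g : K' →ₗ[R] K''} (hf : ∀ z, f (D z) = D' (f z))
    (hg : ∀ z, g (D' z) = D'' (g z)) (hfi : Function.Injective f) (hgs : Function.Surjective g)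
    (hfg : Function.Exact f g) (h1 : IsArtinian R (HD D)) (h3 : IsArtinian R (HD D'')) :
    IsArtinian R (HD D') := by
  refine isArtinian_of_range_eq_ker (HD.map f hf) (HD.map g hg) ?_
  ext w
  obtain ⟨⟨z, hz⟩, rfl⟩ := Submodule.Quotient.mk_surjective _ w
  constructor
  · rintro ⟨v, hv⟩
    obtain ⟨⟨a, ha⟩, rfl⟩ := Submodule.Quotient.mk_surjective _ v
    rw [← hv]
    refine HD_mk_eq_zero.2 ⟨0, ?_⟩
    rw [map_zero]
    exact (hfg.apply_apply_eq_zero a).symm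
  · intro h
    obtain ⟨e, he⟩ := HD_mk_eq_zero.1 (show (Submodule.Quotient.mk _ : HD D'') = 0 from h)
    obtain ⟨e, rfl⟩ := hgs e
    have h2 : g (z - D' e) = 0 := by
      rw [map_sub, hg, sub_eq_zero]; exact he.symm
    obtain ⟨a, ha⟩ := (hfg _).1 h2
    have hz' : D' z = 0 := hz
    refine ⟨Submodule.Quotient.mk ⟨a, ?_⟩, ?_⟩
    · apply hfi
      rw [hf, ha, map_sub, hD', hz', sub_zero, map_zero]
    · refine (Submodule.Quotient.eq _).2 ⟨-e, ?_⟩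
      change D' (-e) = f a - z
      rw [ha, map_neg]; abel

theorem range_artinian_of_factor {W A B : Type*} [AddCommGroup W] [Module R W] [AddCommGroup A]
    [Module R A] [AddCommGroup B] [Module R B] {π : W →ₗ[R] A} {φ : W →ₗ[R] B}
    (hA : IsArtinian R A) (hk : LinearMap.ker π ≤ LinearMap.ker φ) :
    IsArtinian R (LinearMap.range φ) := by
  have h1 : IsArtinian R (W ⧸ LinearMap.ker π) :=
    isArtinian_of_injective (Submodule.liftQ _ π le_rfl)
      (LinearMap.ker_eq_bot.1 (Submodule.ker_liftQ_eq_bot _ _ _ le_rfl))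
  have h2 := isArtinian_of_surjective _ (Submodule.liftQ _ φ hk).rangeRestrict
    (LinearMap.surjective_rangeRestrict _)
  rwa [Submodule.range_liftQ] at h2

/-- The long exact homology sequence of `0 → K --y--> K --g--> K' → 0` shows that the `y`-torsion
of `H(K)` is a quotient of `H(K')`, so Artinianness lifts from `H(K')` to `H(K)`. -/
theorem HD_artinian_of_quotient {D : K →ₗ[R] K} {D' : K' →ₗ[R] K'} (hD : ∀ z, D (D z) = 0)
    {y : R} {g : K →ₗ[R] K'} (hg : ∀ z, g (D z) = D' (g z))
    (hy : Function.Injective (y • LinearMap.id : K →ₗ[R] K)) (hgs : Function.Surjective g)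
    (hex : Function.Exact (y • LinearMap.id : K →ₗ[R] K) g)
    (htor : ∀ w : HD D, ∃ n, y ^ n • w = 0) (h : IsArtinian R (HD D')) :
    IsArtinian R (HD D) := by
  refine isArtinian_of_torsion y htor ?_
  have hy' : ∀ {a b : K}, y • a = y • b → a = b := fun {a b} hab => hy (by simpa using hab)
  -- `W` consists of the chains whose boundary is divisible by `y`.
  let W : Submodule R K := (LinearMap.range (y • LinearMap.id : K →ₗ[R] K)).comap D
  have hW : ∀ e : W, ∃ k, y • k = D e.1 := fun e => e.2
  choose κ hκ using hW
  have hκc : ∀ e, D (κ e) = 0 := fun e => hy' (by rw [← map_smul, hκ, hD, smul_zero])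
  let φ : W →ₗ[R] HD D :=
    { toFun := fun e => Submodule.Quotient.mk ⟨κ e, hκc e⟩
      map_add' := fun a b => by
        rw [← Submodule.Quotient.mk_add]
        congr 1
        apply Subtype.ext
        apply hy'
        change y • κ (a + b) = y • (κ a + κ b)
        rw [smul_add, hκ, hκ, hκ]; simp
      map_smul' := fun r a => by
        rw [RingHom.id_apply, ← Submodule.Quotient.mk_smul]
        congr 1
        apply Subtype.ext
        apply hy'
        change y • κ (r • a) = y • (r • κ a)
        rw [smul_comm, hκ, hκ]; simp }
  let π : W →ₗ[R] HD D' :=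
    Submodule.mkQ _ ∘ₗ (g ∘ₗ W.subtype).codRestrict (LinearMap.ker D') (by
      intro e
      change D' (g e.1) = 0
      rw [← hg, ← hκ]
      exact hex.apply_apply_eq_zero (κ e))
  have hk : LinearMap.ker π ≤ LinearMap.ker φ := by
    intro e he
    obtain ⟨e', he'⟩ := HD_mk_eq_zero.1 (show (Submodule.Quotient.mk _ : HD D') = 0 from he)
    obtain ⟨e', rfl⟩ := hgs e'
    have h2 : g (e.1 - D e') = 0 := by rw [map_sub, hg, sub_eq_zero]; exact he'.symm
    obtain ⟨k, hk⟩ := (hex _).1 h2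
    refine HD_mk_eq_zero.2 ⟨k, hy' ?_⟩
    change y • D k = y • κ e
    rw [hκ, ← map_smul]
    have hk : y • k = e.1 - D e' := by simpa using hk
    rw [hk, map_sub, hD, sub_zero]
  have := range_artinian_of_factor h hk
  refine isArtinian_of_le (?_ : Submodule.torsionBy R (HD D) y ≤ LinearMap.range φ)
  intro w hw
  rw [Submodule.mem_torsionBy_iff] at hw
  obtain ⟨⟨z, hz⟩, rfl⟩ := Submodule.Quotient.mk_surjective _ w
  rw [← Submodule.Quotient.mk_smul] at hw
  obtain ⟨e, he⟩ := HD_mk_eq_zero.1 hw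
  have he : D e = y • z := he
  refine ⟨⟨e, z, he.symm⟩, ?_⟩
  change (Submodule.Quotient.mk _ : HD D) = _
  congr 1
  apply Subtype.ext
  apply hy'
  change y • κ _ = y • z
  rw [hκ, he]

end Differential

/-! ### The Čech complex -/

section Cech

variable {R : Type u} [CommRing R] {M M' M'' : Type u} [AddCommGroup M] [Module R M]
  [AddCommGroup M'] [Module R M'] [AddCommGroup M''] [Module R M'']

/-- The total module of the Čech complex of `M` with respect to `l`, built one element at a
time as the cone of the localization map. -/
noncomputable def Cech (M : Type u) [AddCommGroup M] [Module R M] : List R → ModuleCat.{u} R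
  | [] => ModuleCat.of R M
  | y :: l => ModuleCat.of R (Cech M l × Loc y (Cech M l))

/-- The cone of the localization map `K → K_y` for a differential module `(K, D)`. -/
noncomputable def cone {K : Type u} [AddCommGroup K] [Module R K] (y : R) (D : K →ₗ[R] K) :
    (K × Loc y K) →ₗ[R] (K × Loc y K) :=
  (D ∘ₗ LinearMap.fst R K (Loc y K)).prod
    (frac y 0 ∘ₗ LinearMap.fst R K (Loc y K) - Loc.map y D ∘ₗ LinearMap.snd R K (Loc y K))

theorem cone_apply {K : Type u} [AddCommGroup K] [Module R K] (y : R) (D : K →ₗ[R] K) (a : K)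
    (b : Loc y K) : cone y D (a, b) = (D a, frac y 0 a - Loc.map y D b) := rfl

/-- The differential of the Čech complex. -/
noncomputable def dC : (l : List R) → Cech M l →ₗ[R] Cech M l
  | [] => 0
  | y :: l => cone y (dC l)

theorem cone_sq {K : Type u} [AddCommGroup K] [Module R K] (y : R) {D : K →ₗ[R] K}
    (h : ∀ z, D (D z) = 0) (z : K × Loc y K) : cone y D (cone y D z) = 0 := by
  obtain ⟨a, b⟩ := z
  obtain ⟨n, b, rfl⟩ := frac_surj y b
  rw [cone_apply, cone_apply, map_sub, Loc.map_frac, Loc.map_frac, Loc.map_frac, h, h, map_zero]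
  simp

theorem dC_sq (l : List R) (z : Cech M l) : dC l (dC l z) = 0 := by
  induction l with
  | nil => rfl
  | cons y l ih => exact cone_sq y ih z

/-- Functoriality of the Čech complex. -/
noncomputable def Cech.map (f : M →ₗ[R] M') : (l : List R) → Cech M l →ₗ[R] Cech M' l
  | [] => f
  | y :: l => (Cech.map f l).prodMap (Loc.map y (Cech.map f l))

theorem Cech.map_inj {f : M →ₗ[R] M'} (hf : Function.Injective f) (l : List R) :
    Function.Injective (Cech.map f l) := by
  induction l with
  | nil => exact hf
  | cons y l ih => exact Function.Injective.prodMap ih (Loc.map_inj y ih)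

theorem Cech.map_surj {f : M →ₗ[R] M'} (hf : Function.Surjective f) (l : List R) :
    Function.Surjective (Cech.map f l) := by
  induction l with
  | nil => exact hf
  | cons y l ih => exact Function.Surjective.prodMap ih (Loc.map_surj y ih)

theorem prodMap_exact {A B C A' B' C' : Type*} [AddCommGroup A] [Module R A] [AddCommGroup B]
    [Module R B] [AddCommGroup C] [Module R C] [AddCommGroup A'] [Module R A'] [AddCommGroup B']
    [Module R B'] [AddCommGroup C'] [Module R C'] {f : A →ₗ[R] B} {g : B →ₗ[R] C}
    {f' : A' →ₗ[R] B'} {g' : B' →ₗ[R] C'} (h : Function.Exact f g) (h' : Function.Exact f' g') :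
    Function.Exact (f.prodMap f') (g.prodMap g') := by
  rintro ⟨a, b⟩
  simp only [LinearMap.prodMap_apply, Prod.mk_eq_zero, h a, h' b, Set.mem_range, Prod.exists,
    Prod.mk.injEq]
  constructor
  · rintro ⟨⟨a, rfl⟩, b, rfl⟩; exact ⟨a, b, rfl, rfl⟩
  · rintro ⟨a, b, rfl, rfl⟩; exact ⟨⟨a, rfl⟩, b, rfl⟩

theorem Cech.map_exact {f : M →ₗ[R] M'} {g : M' →ₗ[R] M''} (h : Function.Exact f g)
    (l : List R) : Function.Exact (Cech.map f l) (Cech.map g l) := by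
  induction l with
  | nil => exact h
  | cons y l ih => exact prodMap_exact ih (Loc.map_exact y ih)

theorem Cech.map_smul_id (r : R) (l : List R) :
    Cech.map (r • LinearMap.id : M →ₗ[R] M) l = r • LinearMap.id := by
  induction l with
  | nil => rfl
  | cons y l ih =>
    rw [Cech.map, ih, Loc.map_smul_id]
    rfl

theorem dC_map (f : M →ₗ[R] M') (l : List R) (z : Cech M l) :
    Cech.map f l (dC l z) = dC l (Cech.map f l z) := by
  induction l with
  | nil => exact map_zero f
  | cons y l ih =>
    obtain ⟨a, b⟩ := (z : Cech M l × Loc y (Cech M l))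
    obtain ⟨n, b, rfl⟩ := frac_surj y b
    change (Cech.map f l (dC l a), Loc.map y (Cech.map f l) (frac y 0 a - Loc.map y (dC l) (frac y n b)))
      = (dC l (Cech.map f l a), frac y 0 (Cech.map f l a) -
        Loc.map y (dC l) (Loc.map y (Cech.map f l) (frac y n b)))
    simp only [map_sub, Loc.map_frac, ih]

theorem Cech_kill {r : R} (h : ∀ u : M, r • u = 0) (l : List R) (w : Cech M l) : r • w = 0 := by
  induction l with
  | nil => exact h w
  | cons y l ih =>
    obtain ⟨a, b⟩ := (w : Cech M l × Loc y (Cech M l))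
    obtain ⟨n, b, rfl⟩ := frac_surj y b
    change (r • a, r • frac y n b) = 0
    rw [ih, ← map_smul, ih, map_zero]; rfl

theorem Cech_subsingleton [Subsingleton M] (l : List R) : Subsingleton (Cech M l) := by
  induction l with
  | nil => assumption
  | cons y l ih =>
    have := Loc.subsingleton (Z := Cech M l) y
    exact (inferInstance : Subsingleton (Cech M l × Loc y (Cech M l)))

theorem Cech_artinian_of_kill (hM : IsArtinian R M) {l : List R}
    (h : ∀ y ∈ l, ∀ u : M, y • u = 0) : IsArtinian R (Cech M l) := by
  induction l with
  | nil => exact hM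
  | cons y l ih =>
    have := ih fun z hz => h z (List.mem_cons_of_mem _ hz)
    have : Subsingleton (Loc y (Cech M l)) := by
      refine subsingleton_of_forall_eq 0 fun w => ?_
      obtain ⟨n, z, rfl⟩ := frac_surj y w
      rw [← frac_add y n 1, pow_one, Cech_kill (h y List.mem_cons_self), map_zero]
    exact (inferInstance : IsArtinian R (Cech M l × Loc y (Cech M l)))

/-- The homology of the Čech complex is torsion with respect to each member of `l`. -/
theorem dC_torsion {l : List R} {y : R} (hy : y ∈ l) {z : Cech M l} (hz : dC l z = 0) :
    ∃ N e, dC l e = y ^ N • z := by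
  induction l with
  | nil => simp at hy
  | cons x l ih =>
    obtain ⟨a, b⟩ := (z : Cech M l × Loc x (Cech M l))
    have hz' : ((dC l a, frac x 0 a - Loc.map x (dC l) b) : Cech M l × Loc x (Cech M l)) = 0 := hz
    rw [Prod.mk_eq_zero] at hz'
    obtain ⟨ha, hb⟩ := hz'
    rcases List.mem_cons.1 hy with rfl | hy
    · obtain ⟨n, b, rfl⟩ := frac_surj y b
      rw [Loc.map_frac, sub_eq_zero] at hb
      have h1 : frac y n (y ^ n • a - dC l b) = 0 := by
        rw [map_sub, map_smul, pow_smul_frac_self, hb, sub_self]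
      obtain ⟨k, hk⟩ := frac_eq_zero y h1
      refine ⟨k + n, ((y ^ k • b, 0) : Cech M l × Loc y (Cech M l)), ?_⟩
      change ((dC l (y ^ k • b), frac y 0 (y ^ k • b) - Loc.map y (dC l) 0) :
        Cech M l × Loc y (Cech M l)) = (y ^ (k + n) • a, y ^ (k + n) • frac y n b)
      rw [smul_sub, sub_eq_zero, smul_smul, ← pow_add] at hk
      rw [map_smul, ← hk, map_smul, map_zero, sub_zero, pow_add y k n, mul_smul (y ^ k) (y ^ n) (frac y n b), pow_smul_frac_self]
    · obtain ⟨N, c, hc⟩ := ih hy ha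
      have hb' : Loc.map x (dC l) (y ^ N • b - frac x 0 c) = 0 := by
        rw [map_sub, map_smul, ← sub_eq_zero.1 hb, Loc.map_frac, hc, map_smul, sub_self]
      obtain ⟨n, b0, hb0⟩ := frac_surj x (y ^ N • b - frac x 0 c)
      rw [← hb0, Loc.map_frac] at hb'
      obtain ⟨k, hk⟩ := frac_eq_zero x hb'
      rw [← map_smul] at hk
      obtain ⟨N', e, he⟩ := ih hy hk
      refine ⟨N' + N, ((y ^ N' • c, - frac x (n + k) e) : Cech M l × Loc x (Cech M l)), ?_⟩
      change ((dC l (y ^ N' • c), frac x 0 (y ^ N' • c) - Loc.map x (dC l) (- frac x (n + k) e)) :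
        Cech M l × Loc x (Cech M l)) = (y ^ (N' + N) • a, y ^ (N' + N) • b)
      have h2 : Loc.map x (dC l) (frac x (n + k) e) = y ^ N' • (y ^ N • b - frac x 0 c) := by
        rw [Loc.map_frac, he, map_smul, frac_add, hb0]
      rw [map_neg, h2, map_smul, map_smul, hc, smul_smul, ← pow_add, smul_sub, smul_smul, ← pow_add]
      congr 1
      abel

/-- The Čech cochain `u / (x₁ ⋯ x_r) ^ n`. -/
noncomputable def tt : (l : List R) → (n : ℕ) → M →ₗ[R] Cech M l
  | [], _ => LinearMap.id
  | y :: l, n => LinearMap.inr R (Cech M l) (Loc y (Cech M l)) ∘ₗ frac y n ∘ₗ tt l n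

theorem tt_prod (l : List R) (n k : ℕ) (u : M) : l.prod ^ k • tt l (n + k) u = tt l n u := by
  induction l with
  | nil => simp [tt]
  | cons y l ih =>
    change (y * l.prod) ^ k • ((0, frac y (n + k) (tt l (n + k) u)) : Cech M l × Loc y (Cech M l))
      = (0, frac y n (tt l n u))
    have h : y ^ k • l.prod ^ k • frac y (n + k) (tt l (n + k) u) = frac y n (tt l n u) := by
      rw [← map_smul (frac y (n + k)), ih, pow_smul_frac]
    rw [mul_pow, mul_smul, ← h]
    ext <;> simp

theorem dC_tt (l : List R) (n : ℕ) (u : M) : dC l (tt l n u) = 0 := by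
  induction l with
  | nil => rfl
  | cons y l ih =>
    change ((dC l 0, frac y 0 0 - Loc.map y (dC l) (frac y n (tt l n u))) :
      Cech M l × Loc y (Cech M l)) = 0
    rw [Loc.map_frac, ih]
    simp

theorem tt_boundary_of_mem (l : List R) (n : ℕ) {w : M}
    (hw : w ∈ pI l n • (⊤ : Submodule R M)) : ∃ e, dC l e = tt l n w := by
  induction l generalizing w with
  | nil =>
    rw [pI_nil, Submodule.bot_smul, Submodule.mem_bot] at hw
    exact ⟨0, by simp [hw]⟩
  | cons y l ih =>
    obtain ⟨a, b, hb, rfl⟩ := mem_pI_cons.1 hw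
    obtain ⟨e, he⟩ := ih hb
    refine ⟨((tt l n a, - frac y n e) : Cech M l × Loc y (Cech M l)), ?_⟩
    change ((dC l (tt l n a), frac y 0 (tt l n a) - Loc.map y (dC l) (- frac y n e)) :
      Cech M l × Loc y (Cech M l)) = (0, frac y n (tt l n (y ^ n • a + b)))
    rw [dC_tt, map_neg, Loc.map_frac, he, map_add, map_add, map_smul, map_smul, pow_smul_frac_self,
      sub_neg_eq_add]

/-- If `u` is in the limit closure of the `n`-th powers, the cochain `u / (x₁ ⋯ x_r) ^ n` is a
coboundary. -/
theorem tt_boundary (l : List R) (n : ℕ) {u : M} (hu : InLam l n u) :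
    ∃ e, dC l e = tt l n u := by
  obtain ⟨k, hk⟩ := hu
  obtain ⟨e, he⟩ := tt_boundary_of_mem l _ hk
  exact ⟨e, by rw [he, map_smul, tt_prod]⟩

/-- The projection of the Čech complex onto the top local cohomology. -/
noncomputable def tau : (l : List R) → Cech M l →ₗ[R] Top M l
  | [] => LinearMap.id
  | y :: l => Submodule.mkQ (LinearMap.range (frac y 0 : Top M l →ₗ[R] Loc y (Top M l))) ∘ₗ
      Loc.map y (tau l) ∘ₗ LinearMap.snd R (Cech M l) (Loc y (Cech M l))

theorem tau_dC (l : List R) (z : Cech M l) : tau l (dC l z) = 0 := by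
  induction l with
  | nil => exact map_zero _
  | cons y l ih =>
    obtain ⟨a, b⟩ := (z : Cech M l × Loc y (Cech M l))
    obtain ⟨n, b, rfl⟩ := frac_surj y b
    change Submodule.mkQ (LinearMap.range (frac y 0 : Top M l →ₗ[R] Loc y (Top M l)))
      (Loc.map y (tau l) (frac y 0 a - Loc.map y (dC l) (frac y n b))) = 0
    rw [map_sub, Loc.map_frac, Loc.map_frac, Loc.map_frac, ih, map_zero, sub_zero]
    exact qf_zero y _

theorem tau_tt (l : List R) (n : ℕ) (u : M) : tau l (tt l n u) = hh l n u := by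
  induction l with
  | nil => rfl
  | cons y l ih =>
    change Submodule.mkQ (LinearMap.range (frac y 0 : Top M l →ₗ[R] Loc y (Top M l)))
      (Loc.map y (tau l) (frac y n (tt l n u))) = qf y n (hh l n u)
    rw [Loc.map_frac, ih]
    rfl

end Cech

/-! ### Artinianness of Čech homology -/

section CechArtinian

variable {R : Type u} [CommRing R] [IsNoetherianRing R] [IsLocalRing R]

/-- Čech homology is torsion with respect to every element of the radical of `(l) + Ann M`. -/
theorem HC_torsion {M : Type u} [AddCommGroup M] [Module R M] {l : List R} {I : Ideal R}
    (hI : ∀ r ∈ I, ∀ u : M, r • u = 0) {y : R} (hy : y ∈ (pI l 1 ⊔ I).radical)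
    (w : HD (dC l : Cech M l →ₗ[R] Cech M l)) : ∃ n, y ^ n • w = 0 := by
  have hle : pI l 1 ⊔ I ≤ Ideal.radical (LinearMap.ker (LinearMap.toSpanSingleton R _ w)) := by
    obtain ⟨⟨z, hz⟩, rfl⟩ := Submodule.Quotient.mk_surjective _ w
    refine sup_le (Ideal.span_le.2 ?_) fun r hr => ?_
    · rintro _ ⟨x, hx, rfl⟩
      obtain ⟨N, e, he⟩ := dC_torsion hx hz
      refine ⟨N, ?_⟩
      simp only [pow_one, LinearMap.mem_ker, LinearMap.toSpanSingleton_apply]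
      rw [← Submodule.Quotient.mk_smul]
      exact HD_mk_eq_zero.2 ⟨e, he⟩
    · refine Ideal.le_radical ?_
      rw [LinearMap.mem_ker, LinearMap.toSpanSingleton_apply, ← Submodule.Quotient.mk_smul]
      refine HD_mk_eq_zero.2 ⟨0, ?_⟩
      rw [map_zero]
      exact (Cech_kill (hI r hr) l z).symm
  have h2 := Ideal.radical_mono hle hy
  rw [Ideal.radical_idem] at h2
  obtain ⟨n, hn⟩ := h2
  exact ⟨n, hn⟩

/-- Local cohomology with support in the maximal ideal is Artinian, in the form: the homology of
the Čech complex is Artinian if `l` generates an `m`-primary ideal modulo the annihilator. -/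
theorem HC_artinian {l : List R} (hl : ∀ y ∈ l, y ∈ maximalIdeal R) (I : Ideal R) :
    maximalIdeal R ≤ (pI l 1 ⊔ I).radical →
    ∀ (M : Type u) [AddCommGroup M] [Module R M] [Module.Finite R M],
    (∀ r ∈ I, ∀ u : M, r • u = 0) → IsArtinian R (HD (dC l : Cech M l →ₗ[R] Cech M l)) := by
  induction I using IsNoetherian.induction with
  | hgt I ih =>
  intro hrad M _ _ _ hI
  refine devissage I (fun N _ _ => IsArtinian R (HD (dC l : Cech N l →ₗ[R] Cech N l))) ?_ ?_ ?_ M hI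
  · intro N _ _ hN
    have := Cech_subsingleton (M := N) l
    infer_instance
  · intro p hp hIp
    by_cases hmp : maximalIdeal R ≤ p
    · have hpm : p.IsMaximal := by
        rw [← (maximalIdeal.isMaximal R).eq_of_le hp.ne_top hmp]; infer_instance
      have : IsSimpleModule R (R ⧸ p) :=
        isSimpleModule_iff_isCoatom.2 (Ideal.isMaximal_def.1 hpm)
      have := Cech_artinian_of_kill (inferInstance : IsArtinian R (R ⧸ p)) (l := l)
        fun y hy u => quo_kill (hmp (hl y hy)) u
      infer_instance
    · obtain ⟨y, hym, hyp⟩ := SetLike.not_le_iff_exists.1 hmp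
      have hy1 : Function.Injective (y • LinearMap.id : (R ⧸ p) →ₗ[R] (R ⧸ p)) := by
        rw [← LinearMap.ker_eq_bot, LinearMap.ker_eq_bot']
        intro a ha
        obtain ⟨a, rfl⟩ := Submodule.Quotient.mk_surjective _ a
        have ha : (Submodule.Quotient.mk (y • a) : R ⧸ p) = 0 := ha
        rw [Submodule.Quotient.mk_eq_zero] at ha ⊢
        exact (hp.mem_or_mem ha).resolve_left hyp
      have h1 := Cech.map_inj hy1 l
      have h2 := Cech.map_exact (quoMap_exact p y) l
      rw [Cech.map_smul_id] at h1 h2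
      have hle : I ≤ p ⊔ Ideal.span {y} := hIp.trans le_sup_left
      refine HD_artinian_of_quotient (dC_sq l) (dC_map (quoMap p y) l) h1
        (Cech.map_surj (quoMap_surj p y) l) h2 (HC_torsion (I := p) (fun r hr u => quo_kill hr u)
          (Ideal.radical_mono (sup_le_sup_left hIp _) (hrad hym)))
        (ih (p ⊔ Ideal.span {y}) ?_ ?_ _ fun r hr u => quo_kill hr u)
      · exact hIp.trans_lt (lt_sup_span hyp le_rfl)
      · exact hrad.trans (Ideal.radical_mono (sup_le_sup_left hle _))
  · intro N₁ N₂ N₃ _ _ _ _ _ _ f g hf hg hfg h1 h3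
    exact HD_artinian_of_exact (dC_sq l) (dC_map f l) (dC_map g l) (Cech.map_inj hf l)
      (Cech.map_surj hg l) (Cech.map_exact hfg l) h1 h3

end CechArtinian

/-! ### Descent modulo a power of a parameter -/

section Descend

variable {R : Type u} [CommRing R] {M : Type u} [AddCommGroup M] [Module R M]

/-- If the homology is Artinian, the images of the powers of `x` on it stabilize; this is the
statement at the level of cycles. -/
theorem exists_stable (x : R) {K : Type v} [AddCommGroup K] [Module R K] {D : K →ₗ[R] K}
    (hX : IsArtinian R (HD D)) : ∃ j0, ∀ j, j0 ≤ j → ∀ z, D z = 0 → ∃ c e,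
      D c = 0 ∧ x ^ j0 • z = x ^ j • c + D e := by
  obtain ⟨j0, hj0⟩ := monotone_stabilizes_iff_artinian.2 hX
    ⟨fun j => OrderDual.toDual (LinearMap.range (LinearMap.lsmul R (HD D) (x ^ j))), by
      intro i j hij
      change LinearMap.range (LinearMap.lsmul R (HD D) (x ^ j)) ≤
        LinearMap.range (LinearMap.lsmul R (HD D) (x ^ i))
      rintro _ ⟨w, rfl⟩
      obtain ⟨k, rfl⟩ := Nat.exists_eq_add_of_le hij
      exact ⟨x ^ k • w, by simp [smul_smul, pow_add, mul_comm]⟩⟩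
  refine ⟨j0, fun j hj z hz => ?_⟩
  have h1 : LinearMap.range (LinearMap.lsmul R (HD D) (x ^ j0)) =
    LinearMap.range (LinearMap.lsmul R (HD D) (x ^ j)) := hj0 j hj
  have h2 : x ^ j0 • (Submodule.Quotient.mk ⟨z, hz⟩ : HD D) ∈
      LinearMap.range (LinearMap.lsmul R (HD D) (x ^ j)) := h1 ▸ ⟨_, rfl⟩
  obtain ⟨c, hc⟩ := h2
  obtain ⟨⟨c, hc0⟩, rfl⟩ := Submodule.Quotient.mk_surjective _ c
  rw [LinearMap.lsmul_apply, ← Submodule.Quotient.mk_smul, ← Submodule.Quotient.mk_smul,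
    eq_comm, ← sub_eq_zero, ← Submodule.Quotient.mk_sub] at hc
  obtain ⟨e, he⟩ := HD_mk_eq_zero.1 hc
  refine ⟨c, e, hc0, ?_⟩
  have he : D e = x ^ j0 • z - x ^ j • c := he
  rw [he]; abel

/-- Descent from the sequence `x, l` on `M` to the sequence `l` on `M / x ^ j M`: the exponent
`j0` is that at which the images of the powers of `x` on the Čech homology stabilize. -/
theorem InLam_descend {x : R} {l : List R}
    (hX : IsArtinian R (HD (dC (x :: l) : Cech M (x :: l) →ₗ[R] Cech M (x :: l)))) {u : M}
    (hu : ∀ n, InLam (x :: l) n u) : ∃ j0, ∀ j, j0 ≤ j → ∀ n,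
      InLam l n (Submodule.mkQ (LinearMap.range (LinearMap.lsmul R M (x ^ j))) (x ^ j0 • u)) := by
  obtain ⟨j0, hj0⟩ := exists_stable x hX
  refine ⟨j0, fun j hj n => hh_eq_zero ?_⟩
  obtain ⟨v0, hv0⟩ := tt_boundary (x :: l) (n + j) (hu (n + j))
  -- `w = (0, (u / l ^ n) / x ^ j)` is the boundary of `v`.
  let v : Cech M (x :: l) := (x ^ n * l.prod ^ j) • v0
  have hv : dC (x :: l) v =
      ((0, frac x j (tt l n u)) : Cech M l × Loc x (Cech M l)) := by
    change dC (x :: l) ((x ^ n * l.prod ^ j) • v0) = _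
    rw [map_smul, hv0]
    change (x ^ n * l.prod ^ j) • ((0, frac x (n + j) (tt l (n + j) u)) :
      Cech M l × Loc x (Cech M l)) = _
    have h : (x ^ n * l.prod ^ j) • frac x (n + j) (tt l (n + j) u) = frac x j (tt l n u) := by
      rw [mul_smul, ← map_smul (frac x (n + j)), tt_prod, add_comm n j, pow_smul_frac]
    rw [← h]
    ext <;> simp
  let z : Cech M (x :: l) := ((tt l n u, 0) : Cech M l × Loc x (Cech M l))
  have hz : dC (x :: l) z = x ^ j • dC (x :: l) v := by
    rw [hv]
    change ((dC l (tt l n u), frac x 0 (tt l n u) - Loc.map x (dC l) 0) :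
      Cech M l × Loc x (Cech M l)) = x ^ j • ((0, frac x j (tt l n u)) :
      Cech M l × Loc x (Cech M l))
    rw [dC_tt, map_zero, sub_zero, ← pow_smul_frac_self x j]
    ext <;> simp
  obtain ⟨c, e, hc, hce⟩ := hj0 j hj (z - x ^ j • v) (by rw [map_sub, hz, map_smul _ (x ^ j) v, sub_self])
  obtain ⟨c1, c2⟩ := (c : Cech M l × Loc x (Cech M l))
  obtain ⟨e1, e2⟩ := (e : Cech M l × Loc x (Cech M l))
  obtain ⟨v1, v2, hv12⟩ : ∃ (v1 : Cech M l) (v2 : Loc x (Cech M l)), v = (v1, v2) :=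
    ⟨_, _, rfl⟩
  rw [hv12] at hce
  have h1 : x ^ j0 • (tt l n u - x ^ j • v1) = x ^ j • c1 + dC l e1 := congrArg Prod.fst hce
  have h2 := congrArg (tau l) h1
  rw [map_smul, map_sub, map_smul, map_add, map_smul, tau_dC, add_zero, tau_tt, smul_sub,
    sub_eq_iff_eq_add] at h2
  have h3 := congrArg (Top.map (Submodule.mkQ (LinearMap.range (LinearMap.lsmul R M (x ^ j)))) l) h2
  have hkill : ∀ w : Top (M ⧸ LinearMap.range (LinearMap.lsmul R M (x ^ j))) l,
      x ^ j • w = 0 := Top_kill (fun a => by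
    obtain ⟨a, rfl⟩ := Submodule.Quotient.mk_surjective _ a
    rw [← Submodule.Quotient.mk_smul, Submodule.Quotient.mk_eq_zero]
    exact ⟨a, rfl⟩) l
  rw [map_smul, hh_map, map_add, map_smul, map_smul, map_smul, hkill, hkill, smul_zero, add_zero,
    ← map_smul, ← map_smul] at h3
  exact h3

end Descend

/-! ### Vanishing at the top-dimensional primes -/

section DimTwo

variable {R : Type u} [CommRing R]

/-- The dimension of `R/I` is attained along a prime containing `I`. -/
theorem exists_prime_of_le_dim {I : Ideal R} {n : ℕ}
    (h : (n : WithBot ℕ∞) ≤ ringKrullDim (R ⧸ I)) :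
    ∃ q : Ideal R, q.IsPrime ∧ I ≤ q ∧ (n : WithBot ℕ∞) ≤ ringKrullDim (R ⧸ q) := by
  rw [ringKrullDim_quotient, Order.le_krullDim_iff] at h
  obtain ⟨s, hs⟩ := h
  refine ⟨s.head.1.asIdeal, s.head.1.isPrime, s.head.2, ?_⟩
  rw [ringKrullDim_quotient, Order.le_krullDim_iff]
  refine ⟨⟨s.length, fun i => ⟨(s i).1, ?_⟩, fun i => s.step i⟩, hs⟩
  exact (LTSeries.head_le s i : s.head ≤ s i)

variable [IsNoetherianRing R] [IsLocalRing R]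

theorem dim_le_add_one {I : Ideal R} (hI : I ≤ maximalIdeal R) {y : R} (hy : y ∈ maximalIdeal R) :
    ringKrullDim (R ⧸ I) ≤ ringKrullDim (R ⧸ (I ⊔ Ideal.span {y})) + 1 := by
  have hne : I ≠ ⊤ := fun h => (maximalIdeal.isMaximal R).ne_top (top_le_iff.1 (h ▸ hI))
  have : Nontrivial (R ⧸ I) := Ideal.Quotient.nontrivial_iff.2 hne
  have : IsLocalRing (R ⧸ I) :=
    IsLocalRing.of_surjective' (Ideal.Quotient.mk I) Ideal.Quotient.mk_surjective
  have h1 := ringKrullDim_le_ringKrullDim_quotient_add_encard (R := R ⧸ I)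
    {Ideal.Quotient.mk I y} (by
      rw [IsLocalRing.ringJacobson_eq_maximalIdeal, Set.singleton_subset_iff, SetLike.mem_coe,
        mem_maximalIdeal, mem_nonunits_iff]
      intro hu
      rw [isUnit_iff_exists_inv] at hu
      obtain ⟨b, hb⟩ := hu
      obtain ⟨b, rfl⟩ := Ideal.Quotient.mk_surjective b
      rw [← map_mul, ← map_one (Ideal.Quotient.mk I), Ideal.Quotient.eq] at hb
      refine (maximalIdeal.isMaximal R).ne_top ((Ideal.eq_top_iff_one _).2 ?_)
      have := sub_mem (Ideal.mul_mem_right b _ hy) (hI hb)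
      simp at this)
  have h2 : ringKrullDim ((R ⧸ I) ⧸ Ideal.span {Ideal.Quotient.mk I y}) =
      ringKrullDim (R ⧸ (I ⊔ Ideal.span {y})) := by
    have := ringKrullDim_eq_of_ringEquiv (DoubleQuot.quotQuotEquivQuotSup I (Ideal.span {y}))
    rwa [Ideal.map_span, Set.image_singleton] at this
  rw [h2] at h1
  simpa using h1

theorem dim_le_length (l : List R) (hl : ∀ y ∈ l, y ∈ maximalIdeal R) : ∀ I : Ideal R,
    I ≤ maximalIdeal R → maximalIdeal R ≤ (pI l 1 ⊔ I).radical →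
    ringKrullDim (R ⧸ I) ≤ (l.length : WithBot ℕ∞) := by
  induction l with
  | nil =>
    intro I hI hrad
    rw [pI_nil, bot_sup_eq] at hrad
    rw [ringKrullDim_quotient]
    have : Subsingleton (PrimeSpectrum.zeroLocus (R := R) I) := by
      have key : ∀ a : PrimeSpectrum.zeroLocus (R := R) I, a.1.asIdeal = maximalIdeal R := by
        intro a
        have h1 : maximalIdeal R ≤ a.1.asIdeal :=
          hrad.trans (a.1.isPrime.radical_le_iff.2 a.2)
        exact ((maximalIdeal.isMaximal R).eq_of_le a.1.isPrime.ne_top h1).symm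
      exact ⟨fun a b => Subtype.ext (PrimeSpectrum.ext ((key a).trans (key b).symm))⟩
    simpa using Order.krullDim_nonpos_of_subsingleton
  | cons y l ih =>
    intro I hI hrad
    have hy := hl y List.mem_cons_self
    have h1 := ih (fun z hz => hl z (List.mem_cons_of_mem _ hz)) (I ⊔ Ideal.span {y})
      (sup_le hI ((Ideal.span_singleton_le_iff_mem _).2 hy)) (by
        rw [pI_cons, pow_one] at hrad
        convert hrad using 2
        ac_rfl)
    refine (dim_le_add_one hI hy).trans ?_
    rw [List.length_cons]
    push_cast
    gcongr

/-- Krull's intersection theorem in the localization at `q`: an element that locally lies in all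
`y ^ j M`, with `y ∈ q`, vanishes locally. -/
theorem exists_smul_eq_zero_of_forall_pow {M : Type v} [AddCommGroup M] [Module R M]
    [Module.Finite R M] {q : Ideal R} [hq : q.IsPrime] {y : R} (hy : y ∈ q) {w : M} {j0 : ℕ}
    (h : ∀ j, j0 ≤ j → ∃ s, s ∉ q ∧ ∃ v, s • w = y ^ j • v) : ∃ s, s ∉ q ∧ s • w = 0 := by
  let A := Localization.AtPrime q
  let N := LocalizedModule q.primeCompl M
  have hN : Module.Finite A N := inferInstance
  have hA : IsNoetherianRing A := IsLocalization.isNoetherianRing q.primeCompl _ inferInstance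
  have hbot := Ideal.iInf_pow_smul_eq_bot_of_isLocalRing (R := A) (M := N) (maximalIdeal A)
    (maximalIdeal.isMaximal A).ne_top
  have hw : (LocalizedModule.mk w 1 : N) = 0 := by
    rw [← Submodule.mem_bot A, ← hbot, Submodule.mem_iInf]
    intro i
    obtain ⟨s, hs, v, hv⟩ := h (i + j0) (Nat.le_add_left _ _)
    have h1 : (LocalizedModule.mk w 1 : N) =
        (algebraMap R A y) ^ (i + j0) • LocalizedModule.mk v (⟨s, hs⟩ : q.primeCompl) := by
      rw [← map_pow, algebraMap_smul, LocalizedModule.smul'_mk, LocalizedModule.mk_eq]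
      exact ⟨1, by simp [Submonoid.smul_def, hv]⟩
    rw [h1]
    refine Submodule.smul_mem_smul (Ideal.pow_le_pow_right (Nat.le_add_right i j0) ?_) trivial
    refine Ideal.pow_mem_pow ?_ _
    exact (IsLocalization.AtPrime.to_map_mem_maximal_iff A q y).2 hy
  rw [← LocalizedModule.zero_mk 1, LocalizedModule.mk_eq] at hw
  obtain ⟨⟨s, hs⟩, h2⟩ := hw
  exact ⟨s, hs, by simpa [Submonoid.smul_def] using h2⟩

/-- If `l` generates an `m`-primary ideal modulo `I`, `I M = 0`, and `u` lies in the limit closures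
of all powers of `l`, then `u` vanishes locally at every prime `q` with `dim R/q` equal to the length
of `l`.

The induction passes from `x :: l` and `q` to `l`, the modules `M / x ^ j M`, and a prime `q'`
containing `q + xR` with `dim R/q'` one less; Krull's intersection theorem at `q'` recovers the
statement for `x ^ j0 u` from its images in all `M / x ^ j M`, and `x ∉ q`. -/
theorem exists_smul_eq_zero_of_InLam (l : List R) (hl : ∀ y ∈ l, y ∈ maximalIdeal R) :
    ∀ (I : Ideal R), maximalIdeal R ≤ (pI l 1 ⊔ I).radical →
    ∀ (M : Type u) [AddCommGroup M] [Module R M] [Module.Finite R M],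
    (∀ r ∈ I, ∀ u : M, r • u = 0) → ∀ q : Ideal R, q.IsPrime →
    ringKrullDim (R ⧸ q) = (l.length : WithBot ℕ∞) → ∀ u : M, (∀ n, InLam l n u) →
    ∃ s, s ∉ q ∧ s • u = 0 := by
  induction l with
  | nil =>
    intro I _ M _ _ _ _ q hq _ u hu
    obtain ⟨k, hk⟩ := hu 0
    refine ⟨1, fun h1 => hq.ne_top ((Ideal.eq_top_iff_one _).2 h1), ?_⟩
    simpa [pI_nil] using hk
  | cons x l ih =>
    intro I hrad M _ _ _ hI q hq hdim u hu
    by_cases hIq : I ≤ q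
    swap
    · obtain ⟨s, hs, hsq⟩ := SetLike.not_le_iff_exists.1 hIq
      exact ⟨s, hsq, hI s hs u⟩
    have hl' : ∀ y ∈ l, y ∈ maximalIdeal R := fun y hy => hl y (List.mem_cons_of_mem _ hy)
    have hx : x ∈ maximalIdeal R := hl x List.mem_cons_self
    have hxq : x ∉ q := by
      intro hxq
      have := dim_le_length l hl' q (le_maximalIdeal hq.ne_top) (by
        refine hrad.trans (Ideal.radical_mono ?_)
        rw [pI_cons, pow_one]
        exact sup_le (sup_le (((Ideal.span_singleton_le_iff_mem _).2 hxq).trans le_sup_right)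
          le_sup_left) (hIq.trans le_sup_right))
      rw [hdim, List.length_cons] at this
      exact absurd this (not_le.2 (by exact_mod_cast Nat.lt_succ_self _))
    obtain ⟨q', hq', hqq', hd'⟩ := exists_prime_of_le_dim (I := q ⊔ Ideal.span {x})
      (n := l.length) (by
        have h1 := dim_le_add_one (le_maximalIdeal hq.ne_top) hx
        rw [hdim, List.length_cons] at h1
        push_cast at h1
        exact ENat.WithBot.add_le_add_one_right_iff.1 h1)
    have hdim' : ringKrullDim (R ⧸ q') = (l.length : WithBot ℕ∞) :=
      le_antisymm (dim_le_of_lt (lt_sup_span hxq hqq') hdim.le) hd'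
    have hxq' : x ∈ q' := hqq' (Ideal.mem_sup_right (Ideal.mem_span_singleton_self x))
    obtain ⟨j0, hj0⟩ := InLam_descend (HC_artinian hl I hrad M hI) hu
    obtain ⟨s, hs, hs0⟩ := exists_smul_eq_zero_of_forall_pow (M := M) hxq' (w := x ^ j0 • u)
      (j0 := j0) (by
      intro j hj
      obtain ⟨s, hs, h0⟩ := ih hl' (I ⊔ Ideal.span {x ^ j}) (by
          have h1 : pI (x :: l) 1 ⊔ I ≤ (pI l 1 ⊔ (I ⊔ Ideal.span {x ^ j})).radical := by
            rw [pI_cons, pow_one]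
            refine sup_le (sup_le ((Ideal.span_singleton_le_iff_mem _).2 ⟨j, ?_⟩)
              (le_sup_left.trans Ideal.le_radical))
              (le_sup_left.trans (le_sup_right.trans Ideal.le_radical))
            exact Ideal.mem_sup_right (Ideal.mem_sup_right (Ideal.mem_span_singleton_self _))
          have h2 := hrad.trans (Ideal.radical_mono h1)
          rwa [Ideal.radical_idem] at h2)
        (M ⧸ LinearMap.range (LinearMap.lsmul R M (x ^ j))) (by
          intro r hr a
          obtain ⟨a, rfl⟩ := Submodule.Quotient.mk_surjective _ a
          obtain ⟨i, hi, b, hb, rfl⟩ := Submodule.mem_sup.1 hr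
          obtain ⟨c, rfl⟩ := Ideal.mem_span_singleton'.1 hb
          rw [← Submodule.Quotient.mk_smul, Submodule.Quotient.mk_eq_zero, add_smul, hI i hi,
            zero_add, mul_comm, mul_smul]
          exact ⟨c • a, rfl⟩) q' hq' hdim' _ (hj0 j hj)
      rw [← map_smul, Submodule.mkQ_apply, Submodule.Quotient.mk_eq_zero] at h0
      obtain ⟨v, hv⟩ := h0
      exact ⟨s, hs, v, hv.symm⟩)
    refine ⟨s * x ^ j0, fun h => ?_, by rw [mul_smul, hs0]⟩
    rcases hq.mem_or_mem h with h | h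
    · exact hs ((le_sup_left.trans hqq') h)
    · exact hxq (hq.mem_of_pow_mem _ h)

end DimTwo

/-! ### Limit closures and primary components -/

section Assembly

variable {R : Type u} [CommRing R] {M : Type v} [AddCommGroup M] [Module R M]

theorem pI_ofFn {d : ℕ} (x : Fin d → R) (n : ℕ) :
    pI (List.ofFn x) n = Ideal.span (Set.range fun i => x i ^ n) := by
  rw [pI]
  congr 1
  ext r
  simp [List.mem_ofFn]

/-- The limit closure of the `n`-th powers of `l` as a submodule. -/
def lamSub (M : Type v) [AddCommGroup M] [Module R M] (l : List R) (n : ℕ) : Submodule R M where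
  carrier := {u | InLam l n u}
  add_mem' := by
    rintro a b ⟨k, hk⟩ ⟨k', hk'⟩
    refine ⟨max k k', ?_⟩
    rw [smul_add]
    exact add_mem (InLam.mono hk (le_max_left _ _)) (InLam.mono hk' (le_max_right _ _))
  zero_mem' := ⟨0, by simp⟩
  smul_mem' r _ h := InLam.smul h r

theorem limitClosure_pow {d : ℕ} (x : Fin d → R) (n : ℕ) :
    limitClosure (M := M) (fun i => x i ^ (n + 1)) = lamSub M (List.ofFn x) (n + 1) := by
  have hpow : ∀ k : ℕ, (∏ i, x i ^ (n + 1)) ^ (k + 1) =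
      (List.ofFn x).prod ^ ((n + 1) * (k + 1)) := by
    intro k
    rw [List.prod_ofFn, Finset.prod_pow, pow_mul]
  have hspan : ∀ k : ℕ, Ideal.span (Set.range fun i => (x i ^ (n + 1)) ^ (k + 2)) =
      pI (List.ofFn x) ((n + 1) + (n + 1) * (k + 1)) := by
    intro k
    rw [pI_ofFn]
    congr 2
    funext i
    rw [← pow_mul]
    ring
  refine le_antisymm (iSup_le fun k u hu => ?_) ?_
  · rw [Submodule.mem_comap, LinearMap.lsmul_apply, hpow, hspan] at hu
    exact ⟨_, hu⟩
  · rintro u ⟨k, hk⟩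
    refine Submodule.mem_iSup_of_mem k ?_
    rw [Submodule.mem_comap, LinearMap.lsmul_apply, hpow, hspan]
    exact InLam.mono hk (by nlinarith [Nat.zero_le (n * k)])

variable (R M) in
/-- A finitely generated module has a copy in the universe of the ring. -/
theorem exists_small_copy [Module.Finite R M] :
    ∃ (n : ℕ) (L : Submodule R (Fin n → R)), Nonempty (M ≃ₗ[R] ((Fin n → R) ⧸ L)) := by
  obtain ⟨n, f, hf⟩ := Module.Finite.exists_fin' R M
  exact ⟨n, LinearMap.ker f, ⟨(f.quotKerEquivOfSurjective hf).symm⟩⟩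

variable [IsNoetherianRing R]

theorem mem_of_smul_mem {p : Ideal R} {N : Submodule R M} (hN : associatedPrimes R (M ⧸ N) = {p})
    {s : R} {u : M} (hs : s • u ∈ N) (hu : u ∉ N) : s ∈ p := by
  obtain ⟨P, hP, hle⟩ := exists_le_isAssociatedPrime_of_isNoetherianRing R
    (Submodule.Quotient.mk u : M ⧸ N) (by rwa [Ne, Submodule.Quotient.mk_eq_zero])
  have hPp : P ∈ associatedPrimes R (M ⧸ N) := hP
  rw [hN, Set.mem_singleton_iff] at hPp
  rw [← hPp]
  refine hle ?_
  rw [Submodule.mem_colon_singleton, ← Submodule.Quotient.mk_smul, Submodule.mem_bot,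
    Submodule.Quotient.mk_eq_zero]
  exact hs

/-- If `K` has `q` as an associated prime, then `K` is not contained in the component `N q`.
Applied to `K = ⋂_{p ∈ S} N p` this shows that no associated prime of `K` belongs to `S`. -/
theorem assoc_of_iInf [Module.Finite R M] {N : Ideal R → Submodule R M}
    (hprimary : ∀ p ∈ associatedPrimes R M, associatedPrimes R (M ⧸ N p) = {p})
    (hdecomp : (⨅ p ∈ associatedPrimes R M, N p) = ⊥) {K : Submodule R M} {q : Ideal R}
    (hq : q ∈ associatedPrimes R K) : ¬ K ≤ N q := by
  intro hK
  obtain ⟨hqp, ⟨v, hvK⟩, hv⟩ := isAssociatedPrime_iff.1 hq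
  have hv' : ∀ s : R, s ∈ q ↔ s • v = 0 := by
    intro s
    rw [hv, Submodule.mem_colon_singleton, Submodule.mem_bot]
    exact Subtype.ext_iff
  have hfin := associatedPrimes.finite R M
  have hinf : (hfin.toFinset.inf fun p => (N p).colon {v}) ≤ q := by
    intro s hs
    rw [hv', ← Submodule.mem_bot R, ← hdecomp, Submodule.mem_iInf]
    intro p
    rw [Submodule.mem_iInf]
    intro hp
    have := (Finset.inf_le (f := fun p => (N p).colon {v}) (hfin.mem_toFinset.2 hp)) hs
    exact Submodule.mem_colon_singleton.1 this
  obtain ⟨p, hp, hpq⟩ := (hqp.inf_le').1 hinf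
  rw [hfin.mem_toFinset] at hp
  have hass : q ∈ associatedPrimes R (M ⧸ N p) := by
    refine isAssociatedPrime_iff.2 ⟨hqp, Submodule.Quotient.mk v, ?_⟩
    ext s
    rw [Submodule.mem_colon_singleton, ← Submodule.Quotient.mk_smul, Submodule.mem_bot,
      Submodule.Quotient.mk_eq_zero]
    refine ⟨fun hs => ?_, fun hs => hpq (Submodule.mem_colon_singleton.2 hs)⟩
    rw [(hv' s).1 hs]
    exact zero_mem _
  rw [hprimary p hp, Set.mem_singleton_iff] at hass
  subst hass
  refine hqp.ne_top ((Ideal.eq_top_iff_one _).2 (hpq (Submodule.mem_colon_singleton.2 ?_)))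
  rw [one_smul]
  exact hK hvK

variable [IsLocalRing R]

/-- If `l` is a system of parameters of `R/p` and `N` is `p`-primary, then `N` contains the
intersection of the limit closures of the powers of `l`. -/
theorem mem_of_forall_InLam [Module.Finite R M] {l : List R} {p : Ideal R} (hp : p.IsPrime)
    {N : Submodule R M} (hN : associatedPrimes R (M ⧸ N) = {p})
    (hdim : ringKrullDim (R ⧸ p) = (l.length : WithBot ℕ∞))
    (hrad : (pI l 1 ⊔ p).radical = maximalIdeal R) {u : M} (hu : ∀ n, InLam l (n + 1) u) :
    u ∈ N := by
  have hl : ∀ y ∈ l, y ∈ maximalIdeal R := by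
    intro y hy
    rw [← hrad]
    exact Ideal.le_radical (Ideal.mem_sup_left (by simpa using pow_mem_pI hy 1))
  set I := Module.annihilator R (M ⧸ N) with hI
  have hpI : p ≤ I.radical := by
    rw [Ideal.radical_eq_sInf]
    refine le_sInf fun P ⟨hIP, hP⟩ => ?_
    obtain ⟨p0, hp0, hp0P⟩ := Ideal.exists_minimalPrimes_le hIP
    have := Module.associatedPrimes.minimalPrimes_annihilator_subset_associatedPrimes R (M ⧸ N) hp0
    rw [hN, Set.mem_singleton_iff] at this
    exact this ▸ hp0P
  have hrad' : maximalIdeal R ≤ (pI l 1 ⊔ I).radical := by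
    rw [← hrad, ← Ideal.radical_idem (pI l 1 ⊔ I)]
    exact Ideal.radical_mono (sup_le (le_sup_left.trans Ideal.le_radical)
      (hpI.trans (Ideal.radical_mono le_sup_right)))
  obtain ⟨n, L, ⟨e⟩⟩ := exists_small_copy R (M ⧸ N)
  have hlam : ∀ n, InLam l n (e (N.mkQ u)) := by
    intro n
    rcases n with _ | n
    · obtain ⟨k, hk⟩ := (hu 0).map (e.toLinearMap ∘ₗ N.mkQ)
      refine ⟨k + 1, ?_⟩
      rw [pow_succ', mul_smul]
      have : pI l (0 + 1 + k) ≤ pI l (0 + (k + 1)) := le_of_eq (by congr 1; ring)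
      exact Submodule.smul_mem _ _ (Submodule.smul_mono_left this hk)
    · exact (hu n).map (e.toLinearMap ∘ₗ N.mkQ)
  obtain ⟨s, hs, hs0⟩ := exists_smul_eq_zero_of_InLam l hl I hrad' ((Fin n → R) ⧸ L) (by
    intro r hr a
    obtain ⟨a, rfl⟩ := e.surjective a
    rw [← map_smul, Module.mem_annihilator.1 hr, map_zero]) p hp hdim _ hlam
  by_contra hcon
  refine hs (mem_of_smul_mem hN ?_ hcon)
  rw [← map_smul, ← map_smul, EmbeddingLike.map_eq_zero_iff, Submodule.mkQ_apply,
    Submodule.Quotient.mk_eq_zero] at hs0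
  exact hs0

/-- If `dim M` is at most the length of `l`, and `l` is not a system of parameters of `R/q` for any
associated prime `q` of `M`, then all limit closures of powers of `l` are equal to `M`. -/
theorem InLam_of_assoc [IsAdicComplete (maximalIdeal R) R] [Module.Finite R M] {l : List R}
    (hd : ringKrullDim (R ⧸ Module.annihilator R M) ≤ (l.length : WithBot ℕ∞))
    (hass : ∀ q ∈ associatedPrimes R M, ¬ (ringKrullDim (R ⧸ q) = (l.length : WithBot ℕ∞) ∧
      (pI l 1 ⊔ q).radical = maximalIdeal R)) (n : ℕ) (u : M) : InLam l n u := by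
  obtain ⟨m, L, ⟨e⟩⟩ := exists_small_copy R M
  have hsub : Subsingleton (Top ((Fin m → R) ⧸ L) l) := by
    refine devissage (Module.annihilator R M) (fun N _ _ => Subsingleton (Top N l))
      (fun N _ _ h => Top_subsingleton l) ?_ ?_ _ ?_
    · intro q hq hle
      refine hartshorne_lichtenbaum l q hq ((dim_mono hle).trans hd) fun hbad => ?_
      obtain ⟨p, hp, hpq⟩ := Ideal.exists_minimalPrimes_le hle
      have hpass := Module.associatedPrimes.minimalPrimes_annihilator_subset_associatedPrimes R M hp
      have hpp : p.IsPrime := hp.1.1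
      rcases hpq.lt_or_eq with hlt | rfl
      · have h1 := (dim_succ_le hlt).trans ((dim_mono hp.1.2).trans hd)
        rw [hbad.1] at h1
        exact absurd h1 (not_le.2 (by exact_mod_cast Nat.lt_succ_self _))
      · exact hass p hpass hbad
    · intro N₁ N₂ N₃ _ _ _ _ _ _ f g hf hg hfg h1 h3
      exact Top_exact_subsingleton hg hfg l h1 h3
    · intro r hr a
      obtain ⟨a, rfl⟩ := e.surjective a
      rw [← map_smul, Module.mem_annihilator.1 hr, map_zero]
  have h := (hh_eq_zero (Subsingleton.elim (hh l n (e u)) 0)).map e.symm.toLinearMap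
  simpa using h

end Assembly

end LimClos

/-- Let `(R, m)` be a complete Noetherian local ring, `M` a finitely generated `R`-module of
dimension `d`, and `x = x₁, …, x_d` a sequence of `d` elements of `R`.  If
`0 = ⋂_{p ∈ Ass M} N(p)` is a reduced primary decomposition of `0` in `M` (each `N(p)` being
`p`-primary, i.e. `Ass (M/N(p)) = {p}`), then
`⋂_{n ≥ 1} (x₁^n, …, x_d^n)^lim_M = ⋂_{p ∈ J} N(p)`, where `J` is the set of associated
primes `p` of `M` such that the image of `x` is a system of parameters of `R/p` (i.e.
`dim R/p = d` and the ideal generated by `x` together with `p` is primary to `m`). -/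
theorem intersection_limitClosure_eq_inter_primary_components
    {R : Type*} [CommRing R] [IsNoetherianRing R] [IsLocalRing R]
    [IsAdicComplete (maximalIdeal R) R]
    {M : Type*} [AddCommGroup M] [Module R M] [Module.Finite R M]
    {d : ℕ} (hd : moduleDim R M = d) (x : Fin d → R)
    (N : Ideal R → Submodule R M)
    (hprimary : ∀ p ∈ associatedPrimes R M, associatedPrimes R (M ⧸ N p) = {p})
    (hdecomp : (⨅ p ∈ associatedPrimes R M, N p) = ⊥) :
    (⨅ n : ℕ, limitClosure (M := M) (fun i => x i ^ (n + 1))) =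
      ⨅ (p : Ideal R) (_ : p ∈ associatedPrimes R M)
        (_ : ringKrullDim (R ⧸ p) = (d : WithBot ℕ∞))
        (_ : (Ideal.span (Set.range x) ⊔ p).radical = maximalIdeal R), N p := by
  have hlen : (List.ofFn x).length = d := List.length_ofFn
  have hpI : LimClos.pI (List.ofFn x) 1 = Ideal.span (Set.range x) := by
    simp [LimClos.pI_ofFn]
  simp only [LimClos.limitClosure_pow]
  apply le_antisymm
  · refine le_iInf fun p => le_iInf fun hp => le_iInf fun hdim => le_iInf fun hrad => ?_
    intro u hu
    rw [Submodule.mem_iInf] at hu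
    exact LimClos.mem_of_forall_InLam hp.isPrime (hprimary p hp) (l := List.ofFn x)
      (by rw [hdim, hlen]) (by rw [hpI, hrad]) hu
  · set K : Submodule R M := ⨅ (p : Ideal R) (_ : p ∈ associatedPrimes R M)
        (_ : ringKrullDim (R ⧸ p) = (d : WithBot ℕ∞))
        (_ : (Ideal.span (Set.range x) ⊔ p).radical = maximalIdeal R), N p with hK
    refine le_iInf fun n u hu => ?_
    refine (LimClos.InLam_of_assoc (M := K) (l := List.ofFn x) ?_ ?_ (n + 1) ⟨u, hu⟩).map K.subtype
    · rw [hlen, ← hd]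
      exact LimClos.dim_mono (LinearMap.annihilator_le_of_injective K.subtype K.injective_subtype)
    · rintro q hq ⟨h1, h2⟩
      rw [hlen] at h1
      rw [hpI] at h2
      refine LimClos.assoc_of_iInf hprimary hdecomp hq ?_
      exact iInf_le_of_le q (iInf_le_of_le
        (associatedPrimes.subset_of_injective K.injective_subtype hq)
        (iInf_le_of_le h1 (iInf_le_of_le h2 le_rfl)))
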